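/- Satisfiability of quantifier-free formulas of generalised Semёnov arithmetic is decidable: there exists a computable function f from (Gödel encodings of) such formulas, with their regular atoms presented by DFAs, to Bool such that f(Φ) = true if and only if Φ has a satisfying assignment over the natural numbers. (The paper moreover shows the problem lies in EXPSPACE.) -/

import Mathlib

/-- A DFA over the alphabet `{0,1}^k`, presented as finite data. Letters are numbers
`a < 2^k` whose `j`-th bit is the `j`-th component of the letter; states are numbers;
the transition table maps the index `q * 2^k + a` to the next state. -/
structure RawDFA where
  k : ℕ
  states : ℕ
  trans : List ℕ
  start : ℕ
  accept : List ℕ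

/-- The (deterministic) transition function of the DFA. -/
def RawDFA.step (D : RawDFA) (q a : ℕ) : ℕ := D.trans.getD (q * 2 ^ D.k + a) 0

/-- The state reached on reading a word. -/
def RawDFA.run (D : RawDFA) (w : List ℕ) : ℕ := w.foldl D.step D.start

/-- The DFA accepts a word over `{0,1}^k` (letters coded as numbers `< 2^k`). -/
def RawDFA.Accepts (D : RawDFA) (w : List ℕ) : Prop :=
  (∀ a ∈ w, a < 2 ^ D.k) ∧ D.run w ∈ D.accept

/-- The `j`-th component of the tuple `⟦w⟧ ∈ ℕ^k` denoted by a word over `{0,1}^k`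
in msd-first notation. -/
def wordComp (j : ℕ) (w : List ℕ) : ℕ :=
  w.foldl (fun acc a => 2 * acc + (if a.testBit j then 1 else 0)) 0

/-- The language of `D` is zero-closed, i.e. closed under prepending the all-zero
letter (which is coded by the number `0`). -/
def RawDFA.ZeroClosed (D : RawDFA) : Prop :=
  ∀ (p : ℕ) (w : List ℕ), D.Accepts w → D.Accepts (List.replicate p 0 ++ w)

/-- Quantifier-free formulas of generalised Semënov arithmetic over variables indexed by `ℕ`:
linear equations `a₁·x₀ + ⋯ + a_l·x_{l-1} = b`, exponential equations `x_i = 2^{x_j}`,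
regular atoms `R(x_{i₁}, …, x_{i_k})` with `R` presented by a DFA over `{0,1}^k`, and
conjunctions and disjunctions. -/
inductive SFml where
  | lin : List ℤ → ℤ → SFml
  | expo : ℕ → ℕ → SFml
  | reg : RawDFA → List ℕ → SFml
  | and : SFml → SFml → SFml
  | or : SFml → SFml → SFml

/-- Well-formedness: every regular atom uses a DFA over `{0,1}^k` with `k ≥ 1` whose
language is zero-closed, applied to a list of `k` variables. -/
def SFml.WF : SFml → Prop
  | .lin _ _ => True
  | .expo _ _ => True
  | .reg D xs => 1 ≤ D.k ∧ xs.length = D.k ∧ D.ZeroClosed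
  | .and φ ψ => φ.WF ∧ ψ.WF
  | .or φ ψ => φ.WF ∧ ψ.WF

/-- Satisfaction under an assignment `v : ℕ → ℕ` of natural numbers to the variables. -/
def SFml.Sat (v : ℕ → ℕ) : SFml → Prop
  | .lin c b => (∑ i ∈ Finset.range c.length, c.getD i 0 * (v i : ℤ)) = b
  | .expo i j => v i = 2 ^ v j
  | .reg D xs => ∃ w : List ℕ, D.Accepts w ∧ ∀ j < D.k, wordComp j w = v (xs.getD j 0)
  | .and φ ψ => φ.Sat v ∧ ψ.Sat v
  | .or φ ψ => φ.Sat v ∨ ψ.Sat v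

/-- Gödel encoding of a DFA. -/
def RawDFA.enc (D : RawDFA) : ℕ :=
  Encodable.encode (D.k, D.states, D.trans, D.start, D.accept)

/-- Gödel encoding of formulas. -/
def SFml.enc : SFml → ℕ
  | .lin c b => Nat.pair 0 (Encodable.encode (c, b))
  | .expo i j => Nat.pair 1 (Nat.pair i j)
  | .reg D xs => Nat.pair 2 (Nat.pair D.enc (Encodable.encode xs))
  | .and φ ψ => Nat.pair 3 (Nat.pair φ.enc ψ.enc)
  | .or φ ψ => Nat.pair 4 (Nat.pair φ.enc ψ.enc)

/-! Replace automata by Myhill–Nerode congruences on tuples of numbers: a relation is recognizable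
of index `N` if it is saturated under a congruence with `N` classes for appending a digit. Fix which
exponential atoms of a formula are to hold; together with the resulting recognizable relation they
form a system whose equations are eliminated one at a time, as follows.

Take the equation `x i = 2 ^ x j` whose exponent is largest in a given solution. If `x j` is small
or close to another exponent `x q` with `x p = 2 ^ x q`, then the equation follows from linear
equations such as `x j = x q + c` and `x i = 2 ^ c * x p`, which are recognizable. Otherwise the
leading one of `x i` lies far above all digits of the exponents and of the other powers of two.
The congruence acts on the digits in between through the iterates of a self-map of a set of at most
`2 ^ N` elements, so these digits can be removed and later reinserted in any sufficiently large
number of the right residue modulo `(2 ^ N)!`, which makes `x i` equal to `2 ^ x j` again.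

The exponents survive each elimination while the index grows by a fixed function of itself. Hence
some solution is bounded by a primitive recursive function of the formula, and searching below this
bound decides satisfiability. Regular atoms are decided by a bounded search for accepted words,
because an automaton reading zeros runs into a cycle and long blocks of leading zeros can be cut.
-/

/-! ### Recognizable relations -/

section Recognizable

variable {ι : Type*}

/-- The tuple obtained from `x` by appending the bit `b i` to the binary expansion of every
component `x i`; it corresponds to reading one more letter of an msd-first word. -/
def pushBits (b : ι → Bool) (x : ι → ℕ) : ι → ℕ := fun i => Nat.bit (b i) (x i)

/-- The class `τ (pushBits b x)` is determined by the class `τ x` and the letter `b`. Such maps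
replace deterministic automata: `τ x` is the state reached after reading `x`. -/
def IsBitCongruence {Q : Type*} (τ : (ι → ℕ) → Q) : Prop :=
  ∀ ⦃x y⦄ b, τ x = τ y → τ (pushBits b x) = τ (pushBits b y)

/-- `R` is a union of classes of a congruence with at most `N` classes. By Myhill–Nerode this is
regularity of the language of binary expansions of the elements of `R`, for possibly infinite
tuples, with `N` playing the role of the number of states. -/
def IsRecognizable (N : ℕ) (R : Set (ι → ℕ)) : Prop :=
  ∃ (Q : Type) (_ : Finite Q) (τ : (ι → ℕ) → Q),
    Nat.card Q ≤ N ∧ IsBitCongruence τ ∧ ∀ ⦃x y⦄, τ x = τ y → x ∈ R → y ∈ R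

theorem IsBitCongruence.prodMk {Q Q' : Type*} {τ : (ι → ℕ) → Q} {τ' : (ι → ℕ) → Q'}
    (hτ : IsBitCongruence τ) (hτ' : IsBitCongruence τ') :
    IsBitCongruence fun x => (τ x, τ' x) := fun _ _ b h =>
  Prod.ext (hτ b (congrArg Prod.fst h)) (hτ' b (congrArg Prod.snd h))

theorem pushBits_eq_two_nsmul_add (b : ι → Bool) (x : ι → ℕ) :
    pushBits b x = 2 • x + fun i => (b i).toNat := by
  ext i
  simp [pushBits, Nat.bit_val]

theorem exists_eq_pushBits (x : ι → ℕ) : ∃ b, x = pushBits b fun i => x i / 2 :=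
  ⟨fun i => (x i).bodd, funext fun i => by
    rw [pushBits, ← Nat.div2_val, Nat.bit_bodd_div2]⟩

theorem isBitCongruence_natCast (i : ι) (M : ℕ) :
    IsBitCongruence fun x : ι → ℕ => (x i : ZMod M) := fun x y b h => by
  simp only [pushBits_eq_two_nsmul_add, Pi.add_apply, Pi.smul_apply, smul_eq_mul, Nat.cast_add,
    Nat.cast_mul, h]

theorem isBitCongruence_eq_zero : IsBitCongruence fun x : ι → ℕ => (x = 0 : Prop) :=
  fun x y b h => by
    have pushBits_eq_zero_iff (x : ι → ℕ) : pushBits b x = 0 ↔ x = 0 ∧ ∀ i, b i = false := by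
      simp [funext_iff, pushBits, Nat.bit_eq_zero_iff, forall_and]
    simp only [pushBits_eq_zero_iff, eq_iff_iff.1 h]

namespace IsRecognizable

variable {N M : ℕ} {R R' : Set (ι → ℕ)}

protected theorem mono (h : IsRecognizable N R) (hNM : N ≤ M) : IsRecognizable M R :=
  let ⟨Q, hQ, τ, hcard, hτ⟩ := h
  ⟨Q, hQ, τ, hcard.trans hNM, hτ⟩

protected theorem const (p : Prop) : IsRecognizable 1 {_x : ι → ℕ | p} :=
  ⟨Unit, inferInstance, fun _ => (), by simp, fun _ _ _ _ => rfl, fun _ _ _ h => h⟩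

theorem of_forall_mem {Q : Type} {τ : (ι → ℕ) → Q} (hτ : IsBitCongruence τ) (s : Finset Q)
    (hs : ∀ x, τ x ∈ s) (hR : ∀ ⦃x y⦄, τ x = τ y → x ∈ R → y ∈ R) : IsRecognizable s.card R :=
  ⟨s, inferInstance, fun x => ⟨τ x, hs x⟩, by simp,
    fun _ _ b h => Subtype.ext (hτ b (congrArg Subtype.val h)),
    fun _ _ h => hR (congrArg Subtype.val h)⟩

theorem inter (h : IsRecognizable N R) (h' : IsRecognizable M R') :
    IsRecognizable (N * M) (R ∩ R') := by
  obtain ⟨Q, _, τ, hcard, hτ, hR⟩ := h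
  obtain ⟨Q', _, τ', hcard', hτ', hR'⟩ := h'
  refine ⟨Q × Q', inferInstance, _, ?_, hτ.prodMk hτ', fun x y hxy hx => ?_⟩
  · rw [Nat.card_prod]
    exact Nat.mul_le_mul hcard hcard'
  · exact ⟨hR (congrArg Prod.fst hxy) hx.1, hR' (congrArg Prod.snd hxy) hx.2⟩

theorem comp {κ : Type*} (h : IsRecognizable N R) (f : ι → κ) :
    IsRecognizable N {x : κ → ℕ | x ∘ f ∈ R} :=
  let ⟨Q, hQ, τ, hcard, hτ, hR⟩ := h
  ⟨Q, hQ, fun x => τ (x ∘ f), hcard, fun _ _ b hxy => hτ (b ∘ f) hxy, fun _ _ hxy => hR hxy⟩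

theorem compl (h : IsRecognizable N R) : IsRecognizable N Rᶜ :=
  let ⟨Q, hQ, τ, hcard, hτ, hR⟩ := h
  ⟨Q, hQ, τ, hcard, hτ, fun _ _ hxy hx hy => hx (hR hxy.symm hy)⟩

theorem union (h : IsRecognizable N R) (h' : IsRecognizable M R') :
    IsRecognizable (N * M) (R ∪ R') := by
  simpa [Set.compl_inter] using (h.compl.inter h'.compl).compl

theorem biInter {α : Type*} (s : Finset α) {R : α → Set (ι → ℕ)}
    (h : ∀ a ∈ s, IsRecognizable N (R a)) : IsRecognizable (N ^ s.card) (⋂ a ∈ s, R a) := by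
  classical
  induction s using Finset.induction_on with
  | empty => simpa using IsRecognizable.const (ι := ι) True
  | insert a s ha ih =>
    rw [Finset.card_insert_of_notMem ha, pow_succ', Finset.set_biInter_insert]
    exact (h a (s.mem_insert_self a)).inter (ih fun b hb => h b (Finset.mem_insert_of_mem hb))

end IsRecognizable

theorem isRecognizable_natCast_eq (i : ι) {M : ℕ} (hM : 0 < M) (r : ZMod M) :
    IsRecognizable M {x : ι → ℕ | (x i : ZMod M) = r} :=
  have : NeZero M := ⟨hM.ne'⟩
  ⟨ZMod M, inferInstance, _, (Nat.card_zmod M).le, isBitCongruence_natCast i M,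
    fun _ _ hxy hx => hxy.symm.trans hx⟩

/-! ### Linear constraints -/

/-- Appending a letter to `x` doubles `f x` up to an error depending only on the letter and
bounded by `K`, as it does for linear forms. -/
def IsBitLinear (K : ℕ) (f : (ι → ℕ) → ℤ) : Prop :=
  ∃ g : (ι → Bool) → ℤ, (∀ x b, f (pushBits b x) = 2 * f x + g b) ∧ ∀ b, |g b| ≤ K

theorem isBitLinear_apply (i : ι) : IsBitLinear 1 fun x : ι → ℕ => (x i : ℤ) :=
  ⟨fun b => (b i).toNat, fun x b => by simp [pushBits_eq_two_nsmul_add],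
    fun b => by simp [Bool.toNat_le]⟩

namespace IsBitLinear

variable {K L C : ℕ} {f g : (ι → ℕ) → ℤ}

protected theorem mono (hf : IsBitLinear K f) (hKL : K ≤ L) : IsBitLinear L f :=
  let ⟨g, hfg, hg⟩ := hf
  ⟨g, hfg, fun b => (hg b).trans (mod_cast hKL)⟩

theorem sub (hf : IsBitLinear K f) (hg : IsBitLinear L g) :
    IsBitLinear (K + L) fun x => f x - g x := by
  obtain ⟨f', hf, hf'⟩ := hf
  obtain ⟨g', hg, hg'⟩ := hg
  refine ⟨fun b => f' b - g' b, fun x b => by simp only [hf, hg]; ring, fun b => ?_⟩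
  push_cast
  exact (abs_sub _ _).trans (add_le_add (hf' b) (hg' b))

theorem const_mul (c : ℤ) (hf : IsBitLinear K f) :
    IsBitLinear (c.natAbs * K) fun x => c * f x := by
  obtain ⟨f', hf, hf'⟩ := hf
  refine ⟨fun b => c * f' b, fun x b => by simp only [hf]; ring, fun b => ?_⟩
  rw [abs_mul, Nat.cast_mul, Int.natCast_natAbs]
  exact mul_le_mul_of_nonneg_left (hf' b) (abs_nonneg c)

theorem sum {α : Type*} (s : Finset α) {K : α → ℕ} {f : α → (ι → ℕ) → ℤ}
    (hf : ∀ a, IsBitLinear (K a) (f a)) :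
    IsBitLinear (∑ a ∈ s, K a) fun x => ∑ a ∈ s, f a x := by
  choose g hfg hg using hf
  refine ⟨fun b => ∑ a ∈ s, g a b, fun x b => ?_, fun b => ?_⟩
  · simp only [hfg, Finset.sum_add_distrib, Finset.mul_sum]
  · push_cast
    exact (Finset.abs_sum_le_sum_abs _ _).trans (Finset.sum_le_sum fun a _ => hg a b)

-- Values of absolute value above `C` keep their sign and stay above `C` when bits are appended,
-- so truncating `f` to `[-(C + 1), C + 1]` is a congruence.
theorem isRecognizable_preimage (hf : IsBitLinear C f) {S : Set ℤ}
    (hS : ∀ ⦃z z' : ℤ⦄, max (-(C + 1 : ℤ)) (min (C + 1) z) = max (-(C + 1 : ℤ)) (min (C + 1) z') →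
      z ∈ S → z' ∈ S) :
    IsRecognizable (2 * C + 3) (f ⁻¹' S) := by
  obtain ⟨g, hfg, hg⟩ := hf
  have hcard : (Finset.Icc (-(C + 1 : ℤ)) (C + 1)).card = 2 * C + 3 := by
    rw [Int.card_Icc]
    omega
  rw [← hcard]
  refine .of_forall_mem (τ := fun x => max (-(C + 1 : ℤ)) (min (C + 1) (f x)))
    (fun x y b hxy => ?_) _ (fun x => ?_) fun x y hxy => hS hxy
  · have hgb := abs_le.1 (hg b)
    simp only [hfg] at hxy ⊢
    omega
  · rw [Finset.mem_Icc]
    omega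

theorem isRecognizable_eq (hf : IsBitLinear C f) {c : ℤ} (hc : |c| ≤ C) :
    IsRecognizable (2 * C + 3) {x | f x = c} :=
  hf.isRecognizable_preimage (S := {c}) fun z z' h hz => by
    simp only [Set.mem_singleton_iff, abs_le] at *
    omega

theorem isRecognizable_le (hf : IsBitLinear C f) {c : ℤ} (hc : |c| ≤ C) :
    IsRecognizable (2 * C + 3) {x | c ≤ f x} :=
  hf.isRecognizable_preimage (S := Set.Ici c) fun z z' h hz => by
    simp only [Set.mem_Ici, abs_le] at *
    omega

end IsBitLinear

theorem isBitLinear_sub_mul (i j : ι) (a : ℕ) :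
    IsBitLinear (a + 1) fun x : ι → ℕ => (x i - a * x j : ℤ) := by
  simpa [add_comm] using (isBitLinear_apply i).sub ((isBitLinear_apply j).const_mul a)

theorem isRecognizable_eq_mul_add (i j : ι) {a c C : ℕ} (ha : a + 1 ≤ C) (hc : c ≤ C) :
    IsRecognizable (2 * C + 3) {x : ι → ℕ | x i = a * x j + c} := by
  convert ((isBitLinear_sub_mul i j a).mono ha).isRecognizable_eq (c := c) (by simpa) using 3
  rw [sub_eq_iff_eq_add']
  norm_cast

theorem isRecognizable_mul_add_le (i j : ι) {a c C : ℕ} (ha : a + 1 ≤ C) (hc : c ≤ C) :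
    IsRecognizable (2 * C + 3) {x : ι → ℕ | a * x j + c ≤ x i} := by
  convert ((isBitLinear_sub_mul i j a).mono ha).isRecognizable_le (c := c) (by simpa) using 3
  rw [le_sub_iff_add_le']
  norm_cast

end Recognizable

/-! ### Eventually periodic orbits -/

section Iterate

variable {α : Type*} [Finite α] {P : ℕ}

theorem exists_iterate_add_eq (hP : Nat.card α ≤ P) (f : α → α) (a : α) :
    ∃ i d, 0 < d ∧ i + d ≤ P ∧ f^[i + d] a = f^[i] a := by
  have := Fintype.ofFinite α
  obtain ⟨i, j, hij, h⟩ := Fintype.exists_ne_map_eq_of_card_lt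
    (fun t : Fin (P + 1) => f^[t] a) (by
      rw [Fintype.card_fin, ← Nat.card_eq_fintype_card]
      omega)
  wlog hlt : i < j generalizing i j
  · exact this j i hij.symm h.symm (by omega)
  have hj : (i : ℕ) + (j - i : ℕ) = j := by omega
  exact ⟨i, j - i, by omega, by omega, by rw [hj]; exact h.symm⟩

theorem iterate_add_mul_eq {α : Type*} {f : α → α} {a : α} {i d : ℕ} (h : f^[i + d] a = f^[i] a)
    {t : ℕ} (ht : i ≤ t) (k : ℕ) : f^[t + d * k] a = f^[t] a := by
  have iterate_add_eq {t : ℕ} (ht : i ≤ t) : f^[t + d] a = f^[t] a := by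
    obtain ⟨c, rfl⟩ := Nat.exists_eq_add_of_le' ht
    rw [add_assoc, Function.iterate_add_apply, h, ← Function.iterate_add_apply]
  induction k with
  | zero => rfl
  | succ k ih => rw [Nat.mul_succ, ← add_assoc, iterate_add_eq (by omega), ih]

theorem exists_iterate_eq (hP : Nat.card α ≤ P) (f : α → α) (a : α) (T : ℕ) :
    ∃ t ≤ P, f^[t] a = f^[T] a := by
  obtain ⟨i, d, hd, hid, h⟩ := exists_iterate_add_eq hP f a
  rcases le_or_gt T i with hT | hT
  · exact ⟨T, by omega, rfl⟩
  · have hmod := Nat.mod_lt (T - i) hd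
    refine ⟨i + (T - i) % d, by omega, ?_⟩
    rw [← iterate_add_mul_eq h (Nat.le_add_right _ _) ((T - i) / d), add_assoc, Nat.mod_add_div,
      Nat.add_sub_cancel' hT.le]

theorem iterate_eq_of_modEq_factorial (hP : Nat.card α ≤ P) (f : α → α) (a : α) {t t' : ℕ}
    (ht : P ≤ t) (ht' : P ≤ t') (h : t ≡ t' [MOD P.factorial]) : f^[t] a = f^[t'] a := by
  wlog hle : t ≤ t' generalizing t t'
  · exact (this ht' ht h.symm (le_of_not_ge hle)).symm
  obtain ⟨i, d, hd, hid, hper⟩ := exists_iterate_add_eq hP f a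
  obtain ⟨k, hk⟩ := ((Nat.dvd_factorial hd (by omega)).trans ((Nat.modEq_iff_dvd' hle).1 h))
  rw [← iterate_add_mul_eq hper (by omega : i ≤ t) k, ← hk, Nat.add_sub_cancel' hle]

end Iterate

/-! ### Changing leading digits -/

section LeadingDigits

variable {ι Q : Type*} {τ : (ι → ℕ) → Q}

theorem two_pow_succ_smul_add_pushBits (s : ℕ) (u y : ι → ℕ) (b : ι → Bool) :
    2 ^ (s + 1) • u + pushBits b y = pushBits b (2 ^ s • u + y) := by
  simp only [pushBits_eq_two_nsmul_add, smul_add, smul_smul, pow_succ', add_assoc]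

theorem two_pow_smul_div_add_mod (s : ℕ) (v : ι → ℕ) :
    (2 ^ s • fun i => v i / 2 ^ s) + (fun i => v i % 2 ^ s) = v :=
  funext fun i => Nat.div_add_mod (v i) (2 ^ s)

theorem two_pow_mul_add_lt {s T a b : ℕ} (ha : a < 2 ^ T) (hb : b < 2 ^ s) :
    2 ^ s * a + b < 2 ^ (s + T) := by
  rw [add_comm s, pow_add, mul_comm (2 ^ s)]
  nlinarith

theorem bit_lt_two_pow_succ {b : Bool} {x t : ℕ} : Nat.bit b x < 2 ^ (t + 1) ↔ x < 2 ^ t := by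
  rw [Nat.bit_val, pow_succ]
  cases b <;> simp only [Bool.toNat_false, Bool.toNat_true] <;> omega

theorem IsBitCongruence.two_pow_smul_add (hτ : IsBitCongruence τ) {u u' : ι → ℕ} (h : τ u = τ u')
    {s : ℕ} {y : ι → ℕ} (hy : ∀ i, y i < 2 ^ s) : τ (2 ^ s • u + y) = τ (2 ^ s • u' + y) := by
  induction s generalizing y with
  | zero =>
    obtain rfl : y = 0 := funext fun i => Nat.lt_one_iff.1 (hy i)
    simpa
  | succ s ih =>
    obtain ⟨b, hb⟩ := exists_eq_pushBits y
    rw [hb, two_pow_succ_smul_add_pushBits, two_pow_succ_smul_add_pushBits]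
    exact hτ b (ih fun i => by have := hy i; rw [pow_succ] at this; omega)

/-- `C t` consists of tuples with `t` digits more than those in `C 0`, the additional digits being
letters from a fixed set. -/
def IsLayered (C : ℕ → Set (ι → ℕ)) : Prop :=
  ∃ B, ∀ t, C (t + 1) = Set.image2 pushBits B (C t)

theorem IsLayered.exists_image_eq_iterate {C : ℕ → Set (ι → ℕ)} (hC : IsLayered C)
    (hτ : IsBitCongruence τ) : ∃ f : Set Q → Set Q, ∀ t, τ '' C t = f^[t] (τ '' C 0) := by
  obtain ⟨B, hB⟩ := hC
  let f (S : Set Q) : Set Q := τ '' Set.image2 pushBits B (τ ⁻¹' S)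
  have hf (S : Set (ι → ℕ)) : τ '' Set.image2 pushBits B S = f (τ '' S) := by
    refine (Set.image_mono (Set.image2_subset_left (Set.subset_preimage_image τ S))).antisymm ?_
    rintro _ ⟨_, ⟨b, hb, x, ⟨y, hy, hxy⟩, rfl⟩, rfl⟩
    exact ⟨_, ⟨b, hb, y, hy, rfl⟩, hτ b hxy⟩
  refine ⟨f, fun t => ?_⟩
  induction t with
  | zero => rfl
  | succ t ih => rw [Function.iterate_succ_apply', ← ih, hB, hf]

theorem isLayered_lt_two_pow (Z : Set ι) :
    IsLayered fun t => {u : ι → ℕ | (∀ i, u i < 2 ^ t) ∧ ∀ i ∈ Z, u i = 0} := by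
  refine ⟨{b | ∀ i ∈ Z, b i = false}, fun t => Set.Subset.antisymm (fun u hu => ?_) ?_⟩
  · obtain ⟨b, hb⟩ := exists_eq_pushBits u
    generalize (fun i => u i / 2) = u' at hb
    subst hb
    simp only [Set.mem_ofPred_eq, pushBits, bit_lt_two_pow_succ, Nat.bit_eq_zero_iff] at hu
    exact ⟨b, fun i hi => (hu.2 i hi).2, u', ⟨hu.1, fun i hi => (hu.2 i hi).1⟩, rfl⟩
  · rintro _ ⟨b, hb, u, hu, rfl⟩
    exact ⟨fun i => bit_lt_two_pow_succ.2 (hu.1 i),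
      fun i hi => Nat.bit_eq_zero_iff.2 ⟨hu.2 i hi, hb i hi⟩⟩

theorem bddAbove_range_iff_lt_two_pow {u : ι → ℕ} :
    BddAbove (Set.range u) ↔ ∃ T, ∀ i, u i < 2 ^ T := by
  constructor
  · rintro ⟨B, hB⟩
    exact ⟨B, fun i => (hB ⟨i, rfl⟩).trans_lt Nat.lt_two_pow_self⟩
  · rintro ⟨T, hT⟩
    exact ⟨2 ^ T, Set.forall_mem_range.2 fun i => (hT i).le⟩

theorem bddAbove_range_pushBits {b : ι → Bool} {u : ι → ℕ} :
    BddAbove (Set.range (pushBits b u)) ↔ BddAbove (Set.range u) := by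
  refine ⟨fun h => h.range_mono _ fun i => ?_, fun h => ?_⟩
  · simp only [pushBits, Nat.bit_val]
    omega
  · obtain ⟨T, hT⟩ := bddAbove_range_iff_lt_two_pow.1 h
    exact bddAbove_range_iff_lt_two_pow.2 ⟨T + 1, fun i => bit_lt_two_pow_succ.2 (hT i)⟩

theorem bit_eq_two_pow_succ {b : Bool} {x t : ℕ} :
    Nat.bit b x = 2 ^ (t + 1) ↔ x = 2 ^ t ∧ b = false := by
  rw [Nat.bit_val, pow_succ]
  cases b <;> simp only [Bool.toNat_false, Bool.toNat_true] <;> grind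

theorem isLayered_eq_two_pow (Z : Set ι) (k : ι) :
    IsLayered fun t => {u : ι → ℕ | BddAbove (Set.range u) ∧ (∀ i ∈ Z, u i = 0) ∧ u k = 2 ^ t} := by
  refine ⟨{b | (∀ i ∈ Z, b i = false) ∧ b k = false},
    fun t => Set.Subset.antisymm (fun u hu => ?_) ?_⟩
  · obtain ⟨b, hb⟩ := exists_eq_pushBits u
    generalize (fun i => u i / 2) = u' at hb
    subst hb
    obtain ⟨hbdd, hZ, hk⟩ := hu
    rw [bddAbove_range_pushBits] at hbdd
    simp only [pushBits, Nat.bit_eq_zero_iff, bit_eq_two_pow_succ] at hZ hk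
    exact ⟨b, ⟨fun i hi => (hZ i hi).2, hk.2⟩, u', ⟨hbdd, fun i hi => (hZ i hi).1, hk.1⟩, rfl⟩
  · rintro _ ⟨b, hb, u, ⟨hbdd, hZ, hk⟩, rfl⟩
    exact ⟨bddAbove_range_pushBits.2 hbdd,
      fun i hi => Nat.bit_eq_zero_iff.2 ⟨hZ i hi, hb.1 i hi⟩, bit_eq_two_pow_succ.2 ⟨hk, hb.2⟩⟩

section Finite

variable [Finite Q] {N : ℕ}

theorem natCard_set_le (hN : Nat.card Q ≤ N) : Nat.card (Set Q) ≤ 2 ^ N := by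
  have := Fintype.ofFinite Q
  classical
  rw [Nat.card_eq_fintype_card, Fintype.card_set, ← Nat.card_eq_fintype_card]
  exact Nat.pow_le_pow_right two_pos hN

variable {C : ℕ → Set (ι → ℕ)}

theorem IsLayered.exists_image_eq (hC : IsLayered C) (hτ : IsBitCongruence τ)
    (hN : Nat.card Q ≤ N) (T : ℕ) : ∃ t ≤ 2 ^ N, τ '' C t = τ '' C T := by
  obtain ⟨f, hf⟩ := hC.exists_image_eq_iterate hτ
  obtain ⟨t, ht, htT⟩ := exists_iterate_eq (natCard_set_le hN) f (τ '' C 0) T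
  exact ⟨t, ht, by rw [hf t, hf T, htT]⟩

theorem IsLayered.image_eq_of_modEq (hC : IsLayered C) (hτ : IsBitCongruence τ)
    (hN : Nat.card Q ≤ N) {t t' : ℕ} (ht : 2 ^ N ≤ t) (ht' : 2 ^ N ≤ t')
    (h : t ≡ t' [MOD (2 ^ N).factorial]) : τ '' C t = τ '' C t' := by
  obtain ⟨f, hf⟩ := hC.exists_image_eq_iterate hτ
  rw [hf t, hf t', iterate_eq_of_modEq_factorial (natCard_set_le hN) f (τ '' C 0) ht ht' h]

theorem IsBitCongruence.exists_lt_two_pow (hτ : IsBitCongruence τ) (hN : Nat.card Q ≤ N)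
    {u : ι → ℕ} (hu : BddAbove (Set.range u)) :
    ∃ u', τ u' = τ u ∧ (∀ i, u' i < 2 ^ 2 ^ N) ∧ ∀ i, u i = 0 → u' i = 0 := by
  obtain ⟨T, hT⟩ := bddAbove_range_iff_lt_two_pow.1 hu
  obtain ⟨t, ht, htT⟩ := (isLayered_lt_two_pow {i | u i = 0}).exists_image_eq hτ hN T
  obtain ⟨u', ⟨hlt, hzero⟩, hu'⟩ := htT.ge ⟨u, ⟨hT, fun _ h => h⟩, rfl⟩
  exact ⟨u', hu', fun i => (hlt i).trans_le (Nat.pow_le_pow_right two_pos ht), hzero⟩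

theorem IsBitCongruence.exists_eq_two_pow (hτ : IsBitCongruence τ) (hN : Nat.card Q ≤ N)
    {u : ι → ℕ} (hu : BddAbove (Set.range u)) {k : ι} {l l' : ℕ} (hk : u k = 2 ^ l)
    (hl : 2 ^ N ≤ l) (hl' : 2 ^ N ≤ l') (hll' : l ≡ l' [MOD (2 ^ N).factorial]) :
    ∃ u', τ u' = τ u ∧ BddAbove (Set.range u') ∧ (∀ i, u i = 0 → u' i = 0) ∧ u' k = 2 ^ l' := by
  obtain ⟨u', ⟨hbdd, hzero, hk'⟩, hu'⟩ :=
    ((isLayered_eq_two_pow {i | u i = 0} k).image_eq_of_modEq hτ hN hl hl' hll').le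
      ⟨u, ⟨hu, fun _ h => h, hk⟩, rfl⟩
  exact ⟨u', hu', hbdd, hzero, hk'⟩

end Finite

end LeadingDigits

/-! ### Eliminating exponential equations -/

section Elimination

variable {ι : Type*}

/-- The bounded tuples in `R` that satisfy `x i = 2 ^ x j` for all `(i, j) ∈ E`. -/
def solutions (R : Set (ι → ℕ)) (E : Finset (ι × ι)) : Set (ι → ℕ) :=
  {v | BddAbove (Set.range v) ∧ v ∈ R ∧ ∀ p ∈ E, v p.1 = 2 ^ v p.2}

theorem IsRecognizable.exists_mem_solutions_lt_two_pow {N : ℕ} {R : Set (ι → ℕ)}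
    (hR : IsRecognizable N R) {E : Finset (ι × ι)} {v : ι → ℕ} (hv : v ∈ solutions R E) {T : ℕ}
    (hT : ∀ p ∈ E, v p.2 ≤ T) : ∃ v' ∈ solutions R E, ∀ i, v' i < 2 ^ (T + 1 + 2 ^ N) := by
  obtain ⟨Q, _, τ, hN, hτ, hRτ⟩ := hR
  obtain ⟨hbdd, hvR, hvE⟩ := hv
  set r : ι → ℕ := fun i => v i % 2 ^ (T + 1)
  have hr (i : ι) : r i < 2 ^ (T + 1) := Nat.mod_lt _ (by positivity)
  obtain ⟨u, hu, hu_lt, hu_zero⟩ := hτ.exists_lt_two_pow (u := fun i => v i / 2 ^ (T + 1)) hN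
    (hbdd.range_mono _ fun i => Nat.div_le_self _ _)
  have hlt (i : ι) : (2 ^ (T + 1) • u + r) i < 2 ^ (T + 1 + 2 ^ N) :=
    two_pow_mul_add_lt (hu_lt i) (hr i)
  have heq {i : ι} (hi : v i < 2 ^ (T + 1)) : (2 ^ (T + 1) • u + r) i = v i := by
    simp [r, hu_zero i (Nat.div_eq_of_lt hi), Nat.mod_eq_of_lt hi]
  refine ⟨2 ^ (T + 1) • u + r, ⟨bddAbove_range_iff_lt_two_pow.2 ⟨_, hlt⟩, hRτ ?_ hvR, ?_⟩, hlt⟩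
  · rw [hτ.two_pow_smul_add hu hr, two_pow_smul_div_add_mod]
  · intro p hp
    have hp2 : v p.2 < T + 1 := Nat.lt_succ_of_le (hT p hp)
    have hp1 : v p.1 < 2 ^ (T + 1) := hvE p hp ▸ Nat.pow_lt_pow_right one_lt_two hp2
    rw [heq hp1, heq (hp2.trans Nat.lt_two_pow_self), hvE p hp]

theorem solutions_inter (R S : Set (ι → ℕ)) (E : Finset (ι × ι)) :
    solutions (R ∩ S) E = solutions R E ∩ S := by
  ext v
  simp only [solutions, Set.mem_inter_iff, Set.mem_ofPred_eq]
  tauto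

theorem solutions_insert [DecidableEq ι] (R : Set (ι → ℕ)) (p : ι × ι) (E : Finset (ι × ι)) :
    solutions R (insert p E) = solutions R E ∩ {v | v p.1 = 2 ^ v p.2} := by
  ext v
  simp only [solutions, Finset.forall_mem_insert, Set.mem_inter_iff, Set.mem_ofPred_eq]
  tauto

/-- The tuples `y` whose largest component is `y k` up to binary length and which, when written
below `u`, yield an element of `R`; the number of digits of `y` is `r` modulo `M`. -/
def lowerParts {M : ℕ} (R : Set (ι → ℕ)) (u : ι → ℕ) (k : ι) (r : ZMod M) : Set (ι → ℕ) :=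
  {y | (∀ i, y i < 2 ^ (y k).size) ∧ 2 ^ (y k).size • u + y ∈ R ∧ ((y k).size : ZMod M) = r}

theorem size_pushBits_le (b : ι → Bool) (x : ι → ℕ) (k : ι) :
    (pushBits b x k).size ≤ (x k).size + 1 :=
  Nat.size_le.2 (bit_lt_two_pow_succ.2 (Nat.lt_size_self _))

theorem forall_lt_two_pow_size_pushBits {b : ι → Bool} {x : ι → ℕ} {k : ι}
    (h : ∀ i, pushBits b x i < 2 ^ (pushBits b x k).size) (i : ι) : x i < 2 ^ (x k).size :=
  bit_lt_two_pow_succ.1 ((h i).trans_le (Nat.pow_le_pow_right two_pos (size_pushBits_le b x k)))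

theorem size_pushBits_of_forall_lt {x : ι → ℕ} {k : ι} (h : ∀ i, x i < 2 ^ (x k).size)
    (hx : x ≠ 0) (b : ι → Bool) : (pushBits b x k).size = (x k).size + 1 := by
  refine Nat.size_bit fun h0 => hx (funext fun i => Nat.lt_one_iff.1 ?_)
  simpa [(Nat.bit_eq_zero_iff.1 h0).1] using h i

open Classical in
/-- The class of `y` written below `u`, together with the number of digits of `y` modulo `M`, or
`none` if `y k` is not the largest component of `y` up to binary length. -/
noncomputable def lowerClass {Q : Type*} (M : ℕ) (τ : (ι → ℕ) → Q) (u : ι → ℕ) (k : ι)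
    (y : ι → ℕ) : Option (Q × ZMod M) :=
  if ∀ i, y i < 2 ^ (y k).size then some (τ (2 ^ (y k).size • u + y), (y k).size) else none

theorem IsBitCongruence.lowerClass_pushBits {Q : Type*} {τ : (ι → ℕ) → Q} (hτ : IsBitCongruence τ)
    {M : ℕ} {u : ι → ℕ} {k : ι} {x y : ι → ℕ} (hx : x ≠ 0) (hy : y ≠ 0)
    (h : lowerClass M τ u k x = lowerClass M τ u k y) (b : ι → Bool) :
    lowerClass M τ u k (pushBits b x) = lowerClass M τ u k (pushBits b y) := by
  have class_of_lt {x : ι → ℕ} (hx : x ≠ 0) (h : ∀ i, x i < 2 ^ (x k).size) :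
      lowerClass M τ u k (pushBits b x) =
        some (τ (pushBits b (2 ^ (x k).size • u + x)), ((x k).size + 1 : ZMod M)) := by
    have hsize := size_pushBits_of_forall_lt h hx b
    rw [lowerClass, if_pos fun i => hsize ▸ bit_lt_two_pow_succ.2 (h i), hsize,
      two_pow_succ_smul_add_pushBits, Nat.cast_succ]
  have class_of_not_lt {x : ι → ℕ} (h : ¬ ∀ i, x i < 2 ^ (x k).size) :
      lowerClass M τ u k (pushBits b x) = none :=
    if_neg (mt forall_lt_two_pow_size_pushBits h)
  by_cases hx' : ∀ i, x i < 2 ^ (x k).size <;> by_cases hy' : ∀ i, y i < 2 ^ (y k).size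
  · simp only [lowerClass, if_pos hx', if_pos hy', Option.some.injEq, Prod.mk.injEq] at h
    rw [class_of_lt hx hx', class_of_lt hy hy', hτ b h.1, h.2]
  · simp [lowerClass, if_pos hx', if_neg hy'] at h
  · simp [lowerClass, if_neg hx', if_pos hy'] at h
  · rw [class_of_not_lt hx', class_of_not_lt hy']

theorem IsRecognizable.lowerParts {N M : ℕ} {R : Set (ι → ℕ)} (hR : IsRecognizable N R)
    (u : ι → ℕ) (k : ι) (hM : 0 < M) (r : ZMod M) :
    IsRecognizable (2 * (N * M + 1)) (lowerParts R u k r) := by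
  have : NeZero M := ⟨hM.ne'⟩
  obtain ⟨Q, _, τ, hN, hτ, hRτ⟩ := hR
  refine ⟨Prop × Option (Q × ZMod M), inferInstance, fun y => (y = 0, lowerClass M τ u k y), ?_,
    fun x y b hxy => ?_, ?_⟩
  · simpa [Nat.card_prod, Finite.card_option] using Nat.mul_le_mul_right M hN
  · obtain ⟨hzero, hclass⟩ := Prod.ext_iff.1 hxy
    rcases eq_or_ne x 0 with rfl | hx
    · obtain rfl : y = 0 := hzero.mp rfl
      rfl
    · exact Prod.ext (isBitCongruence_eq_zero b hzero)
        (hτ.lowerClass_pushBits hx (fun hy => hx (hzero.mpr hy)) hclass b)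
  · rintro x y hxy ⟨hx, hxR, hxr⟩
    have hclass : lowerClass M τ u k x = lowerClass M τ u k y := congrArg Prod.snd hxy
    by_cases hy : ∀ i, y i < 2 ^ (y k).size
    · simp only [lowerClass, if_pos hx, if_pos hy, Option.some.injEq, Prod.mk.injEq] at hclass
      exact ⟨hy, hRτ hclass.1 hxR, hclass.2 ▸ hxr⟩
    · simp [lowerClass, if_pos hx, if_neg hy] at hclass

/-- A distance between exponents that suffices for pumping the digits in between. -/
def gap (N : ℕ) : ℕ := 2 ^ N + 2

/-- The index of the relations `x i = a * x j + c` and `a * x j + c ≤ x i` for all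
`a, c ≤ 2 ^ (2 * gap N)`. -/
def linearIndex (N : ℕ) : ℕ := 2 * (2 ^ (2 * gap N) + 1) + 3

/-- The index to which eliminating one exponential equation raises the index `N`. -/
def elimIndex (N : ℕ) : ℕ :=
  2 * (N * (2 ^ N).factorial + 1) * (2 ^ N).factorial * linearIndex N ^ N * linearIndex N *
    linearIndex N

theorem mul_linearIndex_le_elimIndex (N : ℕ) :
    N * (linearIndex N * linearIndex N) ≤ elimIndex N := by
  have hfac : 0 < (2 ^ N).factorial := Nat.factorial_pos _
  have hpow : 0 < linearIndex N ^ N := Nat.pow_pos (Nat.succ_pos _)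
  rw [elimIndex, mul_assoc _ (linearIndex N) (linearIndex N)]
  have h : N ≤ 2 * (N * (2 ^ N).factorial + 1) := by
    have := Nat.le_mul_of_pos_right N hfac
    omega
  exact Nat.mul_le_mul_right _
    ((h.trans (Nat.le_mul_of_pos_right _ hfac)).trans (Nat.le_mul_of_pos_right _ hpow))

section Reduction

variable {N : ℕ} {R : Set (ι → ℕ)} {E : Finset (ι × ι)} {i j : ι} {v : ι → ℕ}

theorem isRecognizable_eq_mul_add_linearIndex (i j : ι) {a c : ℕ}
    (ha : a ≤ 2 ^ (2 * gap N)) (hc : c ≤ 2 ^ (2 * gap N)) :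
    IsRecognizable (linearIndex N) {x : ι → ℕ | x i = a * x j + c} :=
  isRecognizable_eq_mul_add i j (Nat.succ_le_succ ha) (by omega)

theorem isRecognizable_mul_add_le_linearIndex (i j : ι) {a c : ℕ}
    (ha : a ≤ 2 ^ (2 * gap N)) (hc : c ≤ 2 ^ (2 * gap N)) :
    IsRecognizable (linearIndex N) {x : ι → ℕ | a * x j + c ≤ x i} :=
  isRecognizable_mul_add_le i j (Nat.succ_le_succ ha) (by omega)

/-- The tuples whose component `j` is large and exceeds the exponents of `E` by at least
`gap N`. -/
def separated (N : ℕ) (E : Finset (ι × ι)) (j : ι) : Set (ι → ℕ) :=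
  {y | (∀ q ∈ E, y q.2 + gap N ≤ y j) ∧ 2 * gap N ≤ y j}

theorem isRecognizable_separated (hE : E.card ≤ N) (j : ι) :
    IsRecognizable (linearIndex N ^ N * linearIndex N) (separated N E j) := by
  have hgap : gap N ≤ 2 ^ (2 * gap N) := (by omega : gap N ≤ 2 * gap N).trans Nat.lt_two_pow_self.le
  have hgaps : IsRecognizable (linearIndex N ^ E.card)
      (⋂ q ∈ E, {y : ι → ℕ | 1 * y q.2 + gap N ≤ y j}) :=
    .biInter E fun q _ => isRecognizable_mul_add_le_linearIndex j q.2 Nat.one_le_two_pow hgap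
  have hlarge : IsRecognizable (linearIndex N) {y : ι → ℕ | 0 * y j + 2 * gap N ≤ y j} :=
    isRecognizable_mul_add_le_linearIndex j j (Nat.zero_le _) Nat.lt_two_pow_self.le
  have hsep : separated N E j = (⋂ q ∈ E, {y | 1 * y q.2 + gap N ≤ y j}) ∩
      {y | 0 * y j + 2 * gap N ≤ y j} := by
    ext y
    simp [separated]
  rw [hsep]
  exact (hgaps.mono (Nat.pow_le_pow_right (Nat.succ_pos _) hE)).inter hlarge

theorem IsRecognizable.exists_two_pow_smul_add_mem (hR : IsRecognizable N R) {u y : ι → ℕ}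
    (hu : BddAbove (Set.range u)) {s : ℕ} (hy : ∀ i, y i < 2 ^ s) (hmem : 2 ^ s • u + y ∈ R)
    {l l' : ℕ} (hi : u i = 2 ^ l) (hl : 2 ^ N ≤ l) (hl' : 2 ^ N ≤ l')
    (hll' : l ≡ l' [MOD (2 ^ N).factorial]) :
    ∃ u', BddAbove (Set.range (2 ^ s • u' + y)) ∧ 2 ^ s • u' + y ∈ R ∧
      (∀ k, u k = 0 → u' k = 0) ∧ u' i = 2 ^ l' := by
  obtain ⟨Q, _, τ, hN, hτ, hRτ⟩ := hR
  obtain ⟨u', hτu, hu', hzero, hi'⟩ := hτ.exists_eq_two_pow hN hu hi hl hl' hll'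
  obtain ⟨T, hT⟩ := bddAbove_range_iff_lt_two_pow.1 hu'
  refine ⟨u', ?_, hRτ (hτ.two_pow_smul_add hτu.symm hy) hmem, hzero, hi'⟩
  exact bddAbove_range_iff_lt_two_pow.2 ⟨s + T, fun k => two_pow_mul_add_lt (hT k) (hy k)⟩

/-- The relation that eliminates `x i = 2 ^ x j` next to a solution `v` for which `v j` is far
above the exponents of `E`. Here `k` is a fixed variable of maximal value, so that `v i` is the
power of two determined by its digits above those of `v k`; these digits are removed, and the
congruences ensure that they can be put back with a new length. -/
def farReduction (N : ℕ) (R : Set (ι → ℕ)) (E : Finset (ι × ι)) (i j k : ι) (v : ι → ℕ) :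
    Set (ι → ℕ) :=
  lowerParts R (fun a => v a / 2 ^ (v k).size) k ((v k).size : ZMod (2 ^ N).factorial) ∩
    {y | (y j : ZMod (2 ^ N).factorial) = v j} ∩ (separated N E j ∩ {y | y i = 0 * y j + 0})

theorem IsRecognizable.farReduction (hR : IsRecognizable N R) (hE : E.card ≤ N) (i j k : ι)
    (v : ι → ℕ) : IsRecognizable (elimIndex N) (farReduction N R E i j k v) := by
  have hM : 0 < (2 ^ N).factorial := Nat.factorial_pos _
  refine (((hR.lowerParts _ k hM _).inter (isRecognizable_natCast_eq j hM _)).inter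
    ((isRecognizable_separated hE j).inter
      (isRecognizable_eq_mul_add_linearIndex (N := N) i j (Nat.zero_le _) (Nat.zero_le _)))).mono ?_
  rw [elimIndex]
  exact le_of_eq (by ring)

variable [DecidableEq ι]

/-- The relation `R'` replaces the equation `x p.1 = 2 ^ x p.2` in the system given by `R` and
`insert p E`: it admits a solution, and each solution yields one of the original system with the
same exponents. -/
def IsReduction (R : Set (ι → ℕ)) (E : Finset (ι × ι)) (p : ι × ι)
    (R' : Set (ι → ℕ)) : Prop :=
  (solutions R' E).Nonempty ∧
    ∀ y ∈ solutions R' E, ∃ w ∈ solutions R (insert p E), ∀ q ∈ insert p E, w q.2 = y q.2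

theorem isReduction_inter {S : Set (ι → ℕ)} {p : ι × ι} (hv : v ∈ solutions R (insert p E))
    (hvS : v ∈ S) (hS : ∀ y ∈ solutions R E, y ∈ S → y p.1 = 2 ^ y p.2) :
    IsReduction R E p (R ∩ S) := by
  rw [IsReduction, solutions_inter]
  rw [solutions_insert] at hv ⊢
  exact ⟨⟨v, hv.1, hvS⟩, fun y hy => ⟨y, ⟨hy.1, hS y hy.1 hy.2⟩, fun _ _ => rfl⟩⟩

theorem IsRecognizable.exists_isReduction_of_lt (hR : IsRecognizable N R)
    (hv : v ∈ solutions R (insert (i, j) E)) (hj : v j < 2 * gap N) :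
    ∃ R', IsRecognizable (elimIndex N) R' ∧ IsReduction R E (i, j) R' := by
  have hc : v j ≤ 2 ^ (2 * gap N) := hj.le.trans Nat.lt_two_pow_self.le
  have hpow : 2 ^ v j ≤ 2 ^ (2 * gap N) := Nat.pow_le_pow_right two_pos hj.le
  refine ⟨R ∩ ({x | x j = 0 * x j + v j} ∩ {x | x i = 0 * x j + 2 ^ v j}), ?_, ?_⟩
  · exact (hR.inter <| (isRecognizable_eq_mul_add_linearIndex j j (Nat.zero_le _) hc).inter <|
      isRecognizable_eq_mul_add_linearIndex i j (Nat.zero_le _) hpow).mono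
        (mul_linearIndex_le_elimIndex N)
  · have hvE := (solutions_insert R (i, j) E ▸ hv).2
    refine isReduction_inter hv (by simpa using hvE) fun y _ hy => ?_
    simp only [zero_mul, zero_add] at hy
    rw [hy.1, hy.2]

theorem IsRecognizable.exists_isReduction_of_close (hR : IsRecognizable N R)
    (hv : v ∈ solutions R (insert (i, j) E)) {q : ι × ι} (hq : q ∈ E) (hle : v q.2 ≤ v j)
    (hclose : v j < v q.2 + gap N) :
    ∃ R', IsRecognizable (elimIndex N) R' ∧ IsReduction R E (i, j) R' := by
  obtain ⟨c, hc⟩ := Nat.exists_eq_add_of_le hle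
  have hpow : 2 ^ c ≤ 2 ^ (2 * gap N) := Nat.pow_le_pow_right two_pos (by omega)
  refine ⟨R ∩ ({x | x j = 1 * x q.2 + c} ∩ {x | x i = 2 ^ c * x q.1 + 0}), ?_, ?_⟩
  · exact (hR.inter <| (isRecognizable_eq_mul_add_linearIndex j q.2 Nat.one_le_two_pow
      (Nat.lt_two_pow_self.le.trans hpow)).inter <|
      isRecognizable_eq_mul_add_linearIndex i q.1 hpow (Nat.zero_le _)).mono
        (mul_linearIndex_le_elimIndex N)
  · obtain ⟨⟨-, -, hvE⟩, hvi⟩ := solutions_insert R (i, j) E ▸ hv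
    refine isReduction_inter hv ⟨?_, ?_⟩ fun y hy hyS => ?_
    · simpa using hc
    · simp [hvi.trans (congrArg _ hc), hvE q hq, pow_add, mul_comm]
    · simp only [one_mul, add_zero] at hyS
      rw [hyS.1, hyS.2, hy.2.2 q hq, ← pow_add, add_comm]

/-- The variables that keep their value when the digits of `x i` are pumped in order to eliminate
the equation `x i = 2 ^ x j`. -/
def fixedVars (E : Finset (ι × ι)) (j : ι) : Finset ι :=
  insert j (E.image Prod.fst ∪ E.image Prod.snd)

theorem mem_fixedVars_self : j ∈ fixedVars E j :=
  Finset.mem_insert_self _ _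

theorem fst_mem_fixedVars {q : ι × ι} (hq : q ∈ E) : q.1 ∈ fixedVars E j :=
  Finset.mem_insert_of_mem (Finset.mem_union_left _ (Finset.mem_image_of_mem _ hq))

theorem snd_mem_fixedVars {q : ι × ι} (hq : q ∈ E) : q.2 ∈ fixedVars E j :=
  Finset.mem_insert_of_mem (Finset.mem_union_right _ (Finset.mem_image_of_mem _ hq))

theorem size_le_div_two_add_one (n : ℕ) : n.size ≤ n / 2 + 1 := by
  have : n / 2 < 2 ^ (n / 2) := Nat.lt_two_pow_self
  rw [Nat.size_le, pow_succ]
  omega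

theorem size_add_two_pow_le {y : ι → ℕ} (hyE : ∀ q ∈ E, y q.1 = 2 ^ y q.2)
    (hy : y ∈ separated N E j) {k : ι} (hk : k ∈ fixedVars E j) :
    (y k).size + 2 ^ N ≤ y j := by
  obtain ⟨hsep, hlarge⟩ := hy
  rw [gap] at *
  simp only [fixedVars, Finset.mem_insert, Finset.mem_union, Finset.mem_image] at hk
  rcases hk with rfl | ⟨q, hq, rfl⟩ | ⟨q, hq, rfl⟩
  · have := size_le_div_two_add_one (y k)
    omega
  · have := hsep q hq
    rw [hyE q hq, Nat.size_pow]
    omega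
  · have := hsep q hq
    have := size_le_div_two_add_one (y q.2)
    omega

theorem mod_mem_solutions_farReduction {k : ι} (hv : v ∈ solutions R (insert (i, j) E))
    (hsep : v ∈ separated N E j) (hk : k ∈ fixedVars E j)
    (hmax : ∀ a ∈ fixedVars E j, v a ≤ v k) :
    (fun a => v a % 2 ^ (v k).size) ∈ solutions (farReduction N R E i j k v) E := by
  obtain ⟨⟨-, hvR, hvE⟩, hvi : v i = 2 ^ v j⟩ := solutions_insert R (i, j) E ▸ hv
  have hmod {a : ι} (ha : a ∈ fixedVars E j) : v a % 2 ^ (v k).size = v a :=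
    Nat.mod_eq_of_lt ((hmax a ha).trans_lt (Nat.lt_size_self _))
  have hj : j ∈ fixedVars E j := mem_fixedVars_self
  have hlt (a : ι) : v a % 2 ^ (v k).size < 2 ^ (v k).size := Nat.mod_lt _ (by positivity)
  refine ⟨bddAbove_range_iff_lt_two_pow.2 ⟨_, hlt⟩, ⟨⟨⟨?_, ?_, ?_⟩, ?_⟩, ⟨?_, ?_⟩, ?_⟩, ?_⟩
  · simpa only [hmod hk] using hlt
  · simpa only [hmod hk, two_pow_smul_div_add_mod] using hvR
  · simp only [hmod hk]
  · simp only [Set.mem_ofPred_eq, hmod hj]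
  · intro q hq
    simpa only [hmod hj, hmod (snd_mem_fixedVars hq)] using hsep.1 q hq
  · simpa only [hmod hj] using hsep.2
  · simp only [Set.mem_ofPred_eq, hvi, zero_mul, add_zero]
    have := size_add_two_pow_le hvE hsep hk
    have := Nat.two_pow_pos N
    exact Nat.mod_eq_zero_of_dvd (pow_dvd_pow 2 (by omega))
  · intro q hq
    simpa only [hmod (fst_mem_fixedVars hq), hmod (snd_mem_fixedVars hq)] using hvE q hq

theorem exists_mem_solutions_of_mem_farReduction (hR : IsRecognizable N R) {k : ι}
    (hv : v ∈ solutions R (insert (i, j) E)) (hsep : v ∈ separated N E j)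
    (hk : k ∈ fixedVars E j) (hmax : ∀ a ∈ fixedVars E j, v a ≤ v k) {y : ι → ℕ}
    (hy : y ∈ solutions (farReduction N R E i j k v) E) :
    ∃ w ∈ solutions R (insert (i, j) E), ∀ a ∈ fixedVars E j, w a = y a := by
  obtain ⟨⟨hbdd, -, hvE⟩, hvi : v i = 2 ^ v j⟩ := solutions_insert R (i, j) E ▸ hv
  obtain ⟨-, ⟨⟨⟨hlt, hmem, hsize⟩, hyj⟩, hysep, hyi⟩, hyE⟩ := hy
  have hvle := size_add_two_pow_le hvE hsep hk
  have hyle := size_add_two_pow_le hyE hysep hk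
  have := Nat.two_pow_pos N
  have hvi' : v i / 2 ^ (v k).size = 2 ^ (v j - (v k).size) := by
    rw [hvi, Nat.pow_div (by omega) two_pos]
  have hmodEq : v j - (v k).size ≡ y j - (y k).size [MOD (2 ^ N).factorial] := by
    rw [← ZMod.natCast_eq_natCast_iff, Nat.cast_sub (by omega), Nat.cast_sub (by omega), hsize, hyj]
  obtain ⟨u, hu, huR, hzero, hui⟩ := hR.exists_two_pow_smul_add_mem
    (hbdd.range_mono _ fun a => Nat.div_le_self _ _) hlt hmem hvi' (by omega) (by omega) hmodEq
  have hw {a : ι} (ha : a ∈ fixedVars E j) : (2 ^ (y k).size • u + y) a = y a := by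
    have hua := hzero a (Nat.div_eq_of_lt ((hmax a ha).trans_lt (Nat.lt_size_self _)))
    simp [hua]
  rw [solutions_insert]
  refine ⟨_, ⟨⟨hu, huR, fun q hq => ?_⟩, ?_⟩, fun a => hw⟩
  · rw [hw (fst_mem_fixedVars hq), hw (snd_mem_fixedVars hq), hyE q hq]
  · simp only [Set.mem_ofPred_eq, hw mem_fixedVars_self]
    simp only [Set.mem_ofPred_eq] at hyi
    simp only [Pi.add_apply, Pi.smul_apply, smul_eq_mul, hyi, hui, ← pow_add, zero_mul, add_zero]
    congr 1
    omega

theorem IsRecognizable.exists_isReduction (hR : IsRecognizable N R) (hE : E.card ≤ N)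
    (hv : v ∈ solutions R (insert (i, j) E)) (hmax : ∀ q ∈ E, v q.2 ≤ v j) :
    ∃ R', IsRecognizable (elimIndex N) R' ∧ IsReduction R E (i, j) R' := by
  rcases lt_or_ge (v j) (2 * gap N) with hsmall | hlarge
  · exact hR.exists_isReduction_of_lt hv hsmall
  by_cases hsep : ∀ q ∈ E, v q.2 + gap N ≤ v j
  · obtain ⟨k, hk, hkmax⟩ := (fixedVars E j).exists_max_image v ⟨j, mem_fixedVars_self⟩
    refine ⟨_, hR.farReduction hE i j k v,
      ⟨_, mod_mem_solutions_farReduction hv ⟨hsep, hlarge⟩ hk hkmax⟩, fun y hy => ?_⟩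
    obtain ⟨w, hw, hwy⟩ :=
      exists_mem_solutions_of_mem_farReduction hR hv ⟨hsep, hlarge⟩ hk hkmax hy
    refine ⟨w, hw, fun q hq => hwy _ ?_⟩
    rcases Finset.mem_insert.1 hq with rfl | hq
    exacts [mem_fixedVars_self, snd_mem_fixedVars hq]
  · push Not at hsep
    obtain ⟨q, hq, hclose⟩ := hsep
    exact hR.exists_isReduction_of_close hv hq (hmax q hq) hclose

end Reduction

theorem le_elimIndex (N : ℕ) : N ≤ elimIndex N :=
  (Nat.le_mul_of_pos_right N (by simp [linearIndex])).trans (mul_linearIndex_le_elimIndex N)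

/-- A bound for some solution of any solvable system given by `m` exponential equations and a
recognizable relation of index `N ≥ m`. -/
def solutionBound (m N : ℕ) : ℕ :=
  (fun T => 2 ^ (T + 1 + 2 ^ (elimIndex^[m] N)))^[m + 1] 0

theorem solutionBound_succ (m N : ℕ) : solutionBound (m + 1) N =
    2 ^ (solutionBound m (elimIndex N) + 1 + 2 ^ (elimIndex^[m + 1] N)) := by
  rw [solutionBound, Function.iterate_succ_apply' _ (m + 1)]
  rfl

theorem IsRecognizable.exists_mem_solutions_lt_solutionBound {m N : ℕ} {R : Set (ι → ℕ)}
    (hR : IsRecognizable N R) {E : Finset (ι × ι)} (hE : E.card ≤ m) (hm : m ≤ N)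
    (hsol : (solutions R E).Nonempty) : ∃ v ∈ solutions R E, ∀ i, v i < solutionBound m N := by
  classical
  induction m generalizing N R E with
  | zero =>
    obtain rfl : E = ∅ := Finset.card_eq_zero.1 (Nat.le_zero.1 hE)
    obtain ⟨v, hv⟩ := hsol
    exact hR.exists_mem_solutions_lt_two_pow hv (T := 0) (by simp)
  | succ m ih =>
    suffices ∃ w ∈ solutions R E, ∀ q ∈ E, w q.2 ≤ solutionBound m (elimIndex N) by
      obtain ⟨w, hw, hle⟩ := this
      rw [solutionBound_succ]
      have hN := Function.id_le_iterate_of_id_le le_elimIndex (m + 1) N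
      exact (hR.mono hN).exists_mem_solutions_lt_two_pow hw hle
    obtain ⟨v, hv⟩ := hsol
    rcases E.eq_empty_or_nonempty with rfl | hne
    · exact ⟨v, hv, by simp⟩
    obtain ⟨⟨i, j⟩, hij, hmax⟩ := E.exists_max_image (fun q => v q.2) hne
    have hcard : (E.erase (i, j)).card ≤ m := by
      rw [Finset.card_erase_of_mem hij]
      omega
    obtain ⟨R', hR', hsol', hback⟩ := hR.exists_isReduction (hcard.trans (by omega))
      (by rwa [Finset.insert_erase hij]) fun q hq => hmax q (Finset.mem_of_mem_erase hq)
    obtain ⟨y, hy, hlt⟩ := ih hR' hcard ((Nat.le_of_succ_le hm).trans (le_elimIndex N)) hsol'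
    rw [Finset.insert_erase hij] at hback
    obtain ⟨w, hw, hwy⟩ := hback y hy
    exact ⟨w, hw, fun q hq => (hwy q hq).trans_le (hlt _).le⟩

end Elimination

/-! ### Relations presented by automata -/

theorem wordComp_concat (j : ℕ) (w : List ℕ) (a : ℕ) :
    wordComp j (w ++ [a]) = Nat.bit (a.testBit j) (wordComp j w) := by
  simp [wordComp, Nat.bit_val, Bool.toNat, Bool.cond_eq_ite]

namespace RawDFA

variable (D : RawDFA)

theorem run_concat (w : List ℕ) (a : ℕ) : D.run (w ++ [a]) = D.step (D.run w) a := by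
  simp [run]

/-- A finite set of states that contains the initial state and all targets of transitions. -/
def stateSet : Finset ℕ := insert D.start (insert 0 D.trans.toFinset)

theorem card_stateSet_le : D.stateSet.card ≤ D.trans.length + 2 := by
  have h := Finset.card_insert_le D.start (insert 0 D.trans.toFinset)
  have h' := Finset.card_insert_le 0 D.trans.toFinset
  have h'' := D.trans.toFinset_card_le
  rw [stateSet]
  omega

theorem step_mem_stateSet (q a : ℕ) : D.step q a ∈ D.stateSet := by
  rw [step, List.getD_eq_getElem?_getD]
  rcases h : D.trans[q * 2 ^ D.k + a]? with _ | r
  · simp [stateSet]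
  · simp [stateSet, List.mem_of_getElem? h]

theorem run_mem_stateSet (w : List ℕ) : D.run w ∈ D.stateSet := by
  induction w using List.reverseRecOn with
  | nil => exact Finset.mem_insert_self _ _
  | append_singleton w a => exact D.run_concat w a ▸ D.step_mem_stateSet _ _

/-- The word `w` over `{0,1}^k` denotes the first `k` components of `x`. -/
def Denotes (w : List ℕ) (x : ℕ → ℕ) : Prop :=
  (∀ a ∈ w, a < 2 ^ D.k) ∧ ∀ j < D.k, wordComp j w = x j

/-- The relation recognized by `D`, as a set of infinite tuples of which only the first `k`
components matter. -/
def relation : Set (ℕ → ℕ) := {x | ∃ w, D.Accepts w ∧ ∀ j < D.k, wordComp j w = x j}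

theorem mem_relation_iff {x : ℕ → ℕ} :
    x ∈ D.relation ↔ ∃ w, D.Denotes w x ∧ D.run w ∈ D.accept :=
  exists_congr fun _ => and_right_comm

/-- The states reached on the words that denote `x`. -/
def reached (x : ℕ → ℕ) : Set ℕ := {q | ∃ w, D.Denotes w x ∧ D.run w = q}

theorem denotes_nil_iff {x : ℕ → ℕ} : D.Denotes [] x ↔ ∀ j < D.k, x j = 0 := by
  simp [Denotes, wordComp, @eq_comm ℕ 0]

theorem denotes_concat_pushBits_iff {w : List ℕ} {a : ℕ} {b : ℕ → Bool} {x : ℕ → ℕ} :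
    D.Denotes (w ++ [a]) (pushBits b x) ↔
      D.Denotes w x ∧ a < 2 ^ D.k ∧ ∀ j < D.k, a.testBit j = b j := by
  have bit_inj (b b' : Bool) (m n : ℕ) : Nat.bit b m = Nat.bit b' n ↔ m = n ∧ b = b' := by
    cases b <;> cases b' <;> simp [Nat.bit_val] <;> omega
  simp only [Denotes, wordComp_concat, pushBits, bit_inj, List.forall_mem_append,
    List.forall_mem_singleton, forall_and]
  tauto

theorem mem_reached_pushBits_iff {b : ℕ → Bool} {x : ℕ → ℕ} {q : ℕ} :
    q ∈ D.reached (pushBits b x) ↔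
      ((∀ j < D.k, x j = 0) ∧ (∀ j < D.k, b j = false) ∧ D.start = q) ∨
      ∃ q' ∈ D.reached x, ∃ a < 2 ^ D.k, (∀ j < D.k, a.testBit j = b j) ∧ D.step q' a = q := by
  have hnil : D.Denotes [] (pushBits b x) ↔ (∀ j < D.k, x j = 0) ∧ ∀ j < D.k, b j = false := by
    simp only [denotes_nil_iff, pushBits, Nat.bit_eq_zero_iff, forall_and]
  constructor
  · rintro ⟨w, hw, rfl⟩
    induction w using List.reverseRecOn with
    | nil => exact .inl ⟨(hnil.1 hw).1, (hnil.1 hw).2, rfl⟩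
    | append_singleton w a =>
      obtain ⟨hw, ha, hab⟩ := D.denotes_concat_pushBits_iff.1 hw
      exact .inr ⟨_, ⟨w, hw, rfl⟩, a, ha, hab, (D.run_concat w a).symm⟩
  · rintro (⟨hx, hb, rfl⟩ | ⟨_, ⟨w, hw, rfl⟩, a, ha, hab, rfl⟩)
    · exact ⟨[], hnil.2 ⟨hx, hb⟩, rfl⟩
    · exact ⟨w ++ [a], D.denotes_concat_pushBits_iff.2 ⟨hw, ha, hab⟩, D.run_concat w a⟩

theorem isRecognizable_relation : IsRecognizable (2 ^ (D.trans.length + 3)) D.relation := by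
  have hreached {x y : ℕ → ℕ} (h : (Subtype.val ⁻¹' D.reached x : Set D.stateSet) =
      Subtype.val ⁻¹' D.reached y) : D.reached x = D.reached y := by
    have hsub (x : ℕ → ℕ) : D.reached x ⊆ Set.range (Subtype.val : D.stateSet → ℕ) := by
      rintro _ ⟨w, -, rfl⟩
      exact ⟨⟨_, D.run_mem_stateSet w⟩, rfl⟩
    rw [← Set.image_preimage_eq_of_subset (hsub x), h, Set.image_preimage_eq_of_subset (hsub y)]
  refine ⟨Set D.stateSet × Prop, inferInstance,
    fun x => (Subtype.val ⁻¹' D.reached x, ∀ j < D.k, x j = 0), ?_, fun x y b h => ?_,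
    fun x y h hx => ?_⟩
  · have hcard := natCard_set_le (Q := D.stateSet) (by simpa using D.card_stateSet_le)
    have hProp : Nat.card Prop = 2 := by simp
    rw [Nat.card_prod, hProp, pow_succ]
    exact Nat.mul_le_mul_right 2 hcard
  · have hxy : D.reached x = D.reached y := hreached (Prod.ext_iff.1 h).1
    have hzero : (∀ j < D.k, x j = 0) ↔ ∀ j < D.k, y j = 0 := eq_iff_iff.1 (Prod.ext_iff.1 h).2
    refine Prod.ext (Set.ext fun q => ?_) ?_
    · simp only [Set.mem_preimage, mem_reached_pushBits_iff, hxy, hzero]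
    · simp only [pushBits, Nat.bit_eq_zero_iff, forall_and, hzero]
  · obtain ⟨w, hw, hacc⟩ := D.mem_relation_iff.1 hx
    obtain ⟨w', hw', hrun⟩ := (hreached (Prod.ext_iff.1 h).1).le ⟨w, hw, rfl⟩
    exact D.mem_relation_iff.2 ⟨w', hw', hrun ▸ hacc⟩

end RawDFA

/-! ### Formulas -/

theorem natAbs_le_encode (z : ℤ) : z.natAbs ≤ Encodable.encode z := by
  cases z with
  | ofNat n => exact (Nat.le_mul_of_pos_left n two_pos : n ≤ 2 * n)
  | negSucc n => exact (by omega : n + 1 ≤ 2 * n + 1)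

theorem sum_encode_add_length_le_encode {α : Type*} [Encodable α] (l : List α) :
    (l.map Encodable.encode).sum + l.length ≤ Encodable.encode l := by
  induction l with
  | nil => simp
  | cons a l ih =>
    have h := Nat.add_le_pair (Encodable.encode a) (Encodable.encode l)
    rw [Encodable.encode_list_cons, List.map_cons, List.sum_cons, List.length_cons]
    omega

theorem getD_zero_le_encode (l : List ℕ) (j : ℕ) : l.getD j 0 ≤ Encodable.encode l := by
  induction l generalizing j with
  | nil => simp
  | cons a l ih =>
    have h := Nat.add_le_pair (Encodable.encode a) (Encodable.encode l)
    rw [Encodable.encode_list_cons]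
    rw [Encodable.encode_nat] at h ⊢
    cases j with
    | zero => rw [List.getD_cons_zero]; omega
    | succ j => rw [List.getD_cons_succ]; exact (ih j).trans (by omega)

theorem add_add_le_pair_pair (a b c : ℕ) : a + b + c ≤ Nat.pair a (Nat.pair b c) := by
  have h := Nat.add_le_pair a (Nat.pair b c)
  have h' := Nat.add_le_pair b c
  omega

theorem sum_natAbs_getD_le_encode (c : List ℤ) :
    ∑ i ∈ Finset.range c.length, (c.getD i 0).natAbs ≤ Encodable.encode c := by
  calc ∑ i ∈ Finset.range c.length, (c.getD i 0).natAbs = (c.map Int.natAbs).sum := by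
        induction c with
        | nil => simp
        | cons a c ih => simp [Finset.sum_range_succ', ← ih, add_comm]
    _ ≤ (c.map Encodable.encode).sum := List.sum_le_sum fun z _ => natAbs_le_encode z
    _ ≤ Encodable.encode c := by have h := sum_encode_add_length_le_encode c; omega

theorem isRecognizable_linearEquation (c : List ℤ) (b : ℤ) :
    IsRecognizable (2 * Encodable.encode (c, b) + 3)
      {v : ℕ → ℕ | ∑ i ∈ Finset.range c.length, c.getD i 0 * (v i : ℤ) = b} := by
  have hpair := Nat.add_le_pair (Encodable.encode c) (Encodable.encode b)
  rw [← Encodable.encode_prod_val] at hpair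
  have hlinear := IsBitLinear.sum (Finset.range c.length) fun i =>
    (isBitLinear_apply i).const_mul (c.getD i 0)
  refine (hlinear.mono ?_).isRecognizable_eq ?_
  · have h := sum_natAbs_getD_le_encode c
    simp only [mul_one]
    omega
  · have h := natAbs_le_encode b
    rw [Int.abs_eq_natAbs]
    exact_mod_cast h.trans (by omega)

theorem RawDFA.length_trans_le_enc (D : RawDFA) : D.trans.length ≤ D.enc := by
  calc D.trans.length ≤ Encodable.encode D.trans :=
        le_of_add_le_right (sum_encode_add_length_le_encode D.trans)
    _ ≤ Encodable.encode (D.trans, D.start, D.accept) := Nat.left_le_pair _ _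
    _ ≤ Encodable.encode (D.states, D.trans, D.start, D.accept) := Nat.right_le_pair _ _
    _ ≤ D.enc := Nat.right_le_pair _ _

namespace SFml

/-- The pairs `(i, j)` such that `x_i = 2^{x_j}` is an atom of the formula. -/
def exponentials : SFml → Finset (ℕ × ℕ)
  | .lin _ _ => ∅
  | .expo i j => {(i, j)}
  | .reg _ _ => ∅
  | .and φ ψ => φ.exponentials ∪ ψ.exponentials
  | .or φ ψ => φ.exponentials ∪ ψ.exponentials

/-- The relation defined by a formula once its exponential atoms are declared to be true if they
belong to `E` and false otherwise. -/
def regularPart (E : Finset (ℕ × ℕ)) : SFml → Set (ℕ → ℕ)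
  | .lin c b => {v | ∑ i ∈ Finset.range c.length, c.getD i 0 * (v i : ℤ) = b}
  | .expo i j => {_v | (i, j) ∈ E}
  | .reg D xs => {v | v ∘ (xs.getD · 0) ∈ D.relation}
  | .and φ ψ => φ.regularPart E ∩ ψ.regularPart E
  | .or φ ψ => φ.regularPart E ∪ ψ.regularPart E

theorem card_exponentials_le_enc (Φ : SFml) : Φ.exponentials.card ≤ Φ.enc := by
  induction Φ with
  | lin | reg => simp [exponentials]
  | expo i j =>
    have h := add_add_le_pair_pair 1 i j
    simp only [exponentials, enc, Finset.card_singleton]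
    omega
  | and φ ψ hφ hψ | or φ ψ hφ hψ =>
    refine (Finset.card_union_le _ _).trans ((Nat.add_le_add hφ hψ).trans ?_)
    exact (Nat.add_le_pair _ _).trans (Nat.right_le_pair _ _)

theorem isRecognizable_regularPart (E : Finset (ℕ × ℕ)) (Φ : SFml) :
    IsRecognizable (2 ^ (Φ.enc + 3)) (Φ.regularPart E) := by
  have two_pow_mul_le {a b t : ℕ} (ht : 3 ≤ t) :
      2 ^ (a + 3) * 2 ^ (b + 3) ≤ 2 ^ (Nat.pair t (Nat.pair a b) + 3) := by
    have h := add_add_le_pair_pair t a b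
    rw [← pow_add]
    exact Nat.pow_le_pow_right two_pos (by omega)
  induction Φ with
  | lin c b =>
    have h : Encodable.encode (c, b) ≤ (lin c b).enc := Nat.right_le_pair _ _
    have hlt := (lin c b).enc.lt_two_pow_self
    refine (isRecognizable_linearEquation c b).mono ?_
    rw [pow_add]
    omega
  | expo i j => exact (IsRecognizable.const _).mono Nat.one_le_two_pow
  | reg D xs =>
    have h := D.length_trans_le_enc
    have h' := add_add_le_pair_pair 2 D.enc (Encodable.encode xs)
    refine (D.isRecognizable_relation.comp _).mono (Nat.pow_le_pow_right two_pos ?_)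
    rw [enc]
    omega
  | and φ ψ hφ hψ => exact (hφ.inter hψ).mono (two_pow_mul_le le_rfl)
  | or φ ψ hφ hψ => exact (hφ.union hψ).mono (two_pow_mul_le (by norm_num))

theorem Sat.mem_regularPart {Φ : SFml} {v : ℕ → ℕ} (h : Φ.Sat v) {E : Finset (ℕ × ℕ)}
    (hE : ∀ p ∈ Φ.exponentials, v p.1 = 2 ^ v p.2 → p ∈ E) : v ∈ Φ.regularPart E := by
  induction Φ with
  | lin | reg => exact h
  | expo i j => exact hE (i, j) (Finset.mem_singleton_self _) h
  | and φ ψ hφ hψ =>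
    exact ⟨hφ h.1 fun p hp => hE p (Finset.mem_union_left _ hp),
      hψ h.2 fun p hp => hE p (Finset.mem_union_right _ hp)⟩
  | or φ ψ hφ hψ =>
    exact h.imp (fun h => hφ h fun p hp => hE p (Finset.mem_union_left _ hp))
      fun h => hψ h fun p hp => hE p (Finset.mem_union_right _ hp)

theorem sat_of_mem_regularPart {Φ : SFml} {v : ℕ → ℕ} {E : Finset (ℕ × ℕ)}
    (h : v ∈ Φ.regularPart E) (hE : ∀ p ∈ E, v p.1 = 2 ^ v p.2) : Φ.Sat v := by
  induction Φ with
  | lin | reg => exact h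
  | expo i j => exact hE (i, j) h
  | and φ ψ hφ hψ => exact ⟨hφ h.1, hψ h.2⟩
  | or φ ψ hφ hψ => exact h.imp hφ hψ

theorem sat_congr {Φ : SFml} {v v' : ℕ → ℕ} (h : ∀ i < Φ.enc, v i = v' i) :
    Φ.Sat v ↔ Φ.Sat v' := by
  induction Φ with
  | lin c b =>
    have hlength : c.length ≤ (lin c b).enc := calc
      c.length ≤ Encodable.encode c := le_of_add_le_right (sum_encode_add_length_le_encode c)
      _ ≤ Encodable.encode (c, b) := Nat.left_le_pair _ _
      _ ≤ (lin c b).enc := Nat.right_le_pair _ _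
    rw [Sat, Sat, Finset.sum_congr rfl fun i hi => ?_]
    rw [h i ((Finset.mem_range.1 hi).trans_le hlength)]
  | expo i j =>
    have hle : 1 + i + j ≤ (expo i j).enc := add_add_le_pair_pair 1 i j
    rw [Sat, Sat, h i (by omega), h j (by omega)]
  | reg D xs =>
    have hle : 2 + D.enc + Encodable.encode xs ≤ (reg D xs).enc := add_add_le_pair_pair _ _ _
    have hxs (j : ℕ) : v (xs.getD j 0) = v' (xs.getD j 0) :=
      h _ ((getD_zero_le_encode xs j).trans_lt (by omega))
    simp only [Sat, hxs]
  | and φ ψ hφ hψ | or φ ψ hφ hψ =>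
    have hleft : φ.enc ≤ Nat.pair φ.enc ψ.enc := Nat.left_le_pair _ _
    have hright : ψ.enc ≤ Nat.pair φ.enc ψ.enc := Nat.right_le_pair _ _
    have hpair (t : ℕ) : Nat.pair φ.enc ψ.enc ≤ Nat.pair t (Nat.pair φ.enc ψ.enc) :=
      Nat.right_le_pair _ _
    rw [Sat, Sat, hφ fun i hi => h i (hi.trans_le (hleft.trans (hpair _))),
      hψ fun i hi => h i (hi.trans_le (hright.trans (hpair _)))]

/-- A bound on the values of some satisfying assignment of any satisfiable formula with Gödel
number `n`. -/
def modelBound (n : ℕ) : ℕ := solutionBound n (2 ^ (n + 3))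

theorem exists_sat_lt_modelBound {Φ : SFml} (h : ∃ v, Φ.Sat v) :
    ∃ v, Φ.Sat v ∧ ∀ i, v i < modelBound Φ.enc := by
  classical
  obtain ⟨v, hv⟩ := h
  set u : ℕ → ℕ := fun i => if i < Φ.enc then v i else 0
  have hu : Φ.Sat u := (sat_congr fun i hi => (if_pos hi).symm).1 hv
  have hbdd : BddAbove (Set.range u) := by
    refine ⟨∑ i ∈ Finset.range Φ.enc, v i, ?_⟩
    rintro _ ⟨i, rfl⟩
    by_cases hi : i < Φ.enc
    · rw [show u i = v i from if_pos hi]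
      exact Finset.single_le_sum (f := v) (fun _ _ => Nat.zero_le _) (Finset.mem_range.2 hi)
    · exact (if_neg hi : u i = 0).trans_le (Nat.zero_le _)
  set E := Φ.exponentials.filter fun p => u p.1 = 2 ^ u p.2
  have hmem : u ∈ solutions (Φ.regularPart E) E :=
    ⟨hbdd, hu.mem_regularPart fun p hp hup => Finset.mem_filter.2 ⟨hp, hup⟩,
      fun p hp => (Finset.mem_filter.1 hp).2⟩
  have hindex : Φ.enc ≤ 2 ^ (Φ.enc + 3) := (Nat.le_add_right _ 3).trans Nat.lt_two_pow_self.le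
  obtain ⟨w, ⟨-, hwR, hwE⟩, hlt⟩ :=
    (isRecognizable_regularPart E Φ).exists_mem_solutions_lt_solutionBound
      ((Finset.card_filter_le _ _).trans Φ.card_exponentials_le_enc) hindex ⟨u, hmem⟩
  exact ⟨w, sat_of_mem_regularPart hwR hwE, hlt⟩

end SFml

/-! ### Bounded search -/

/-- The lists of length `n` with entries below `B`. -/
def boundedLists (B : ℕ) : ℕ → List (List ℕ)
  | 0 => [[]]
  | n + 1 => (boundedLists B n).flatMap fun l => (List.range B).map (· :: l)

theorem mem_boundedLists {B n : ℕ} {l : List ℕ} :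
    l ∈ boundedLists B n ↔ l.length = n ∧ ∀ a ∈ l, a < B := by
  induction n generalizing l with
  | zero => cases l <;> simp [boundedLists]
  | succ n ih =>
    cases l with
    | nil => simp [boundedLists]
    | cons a l => simp [boundedLists, ih]; tauto

/-- The assignment that maps the variables `x₀, x₁, …` to the entries of `l`, and to `0` beyond
its length. -/
def assignment (l : List ℕ) (i : ℕ) : ℕ := l.getD i 0

theorem SFml.exists_sat_iff {Φ : SFml} :
    (∃ v, Φ.Sat v) ↔ ∃ l ∈ boundedLists (modelBound Φ.enc) Φ.enc, Φ.Sat (assignment l) := by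
  refine ⟨fun h => ?_, fun ⟨l, _, hl⟩ => ⟨_, hl⟩⟩
  obtain ⟨v, hv, hlt⟩ := exists_sat_lt_modelBound h
  refine ⟨(List.range Φ.enc).map v, mem_boundedLists.2 ?_, (sat_congr fun i hi => ?_).1 hv⟩
  · simpa using fun i _ => hlt i
  · simp [assignment, hi]

theorem exists_replicate_zero_append {k : ℕ} {w : List ℕ} (hw : ∀ a ∈ w, a < 2 ^ k) :
    ∃ T w', w = List.replicate T 0 ++ w' ∧ w'.length ≤ ∑ j ∈ Finset.range k, wordComp j w := by
  induction w using List.reverseRecOn with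
  | nil => exact ⟨0, [], rfl, Nat.zero_le _⟩
  | append_singleton w a ih =>
    obtain ⟨T, w', rfl, hle⟩ := ih fun a ha => hw a (List.mem_append_left _ ha)
    have hmono (j : ℕ) : wordComp j (List.replicate T 0 ++ w') ≤
        wordComp j (List.replicate T 0 ++ w' ++ [a]) := by
      rw [wordComp_concat, Nat.bit_val]
      omega
    by_cases hzero : w' = [] ∧ a = 0
    · obtain ⟨rfl, rfl⟩ := hzero
      exact ⟨T + 1, [], by simp [List.replicate_succ'], Nat.zero_le _⟩
    refine ⟨T, w' ++ [a], List.append_assoc _ _ _, ?_⟩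
    rw [List.length_append, List.length_singleton]
    refine hle.trans_lt (Finset.sum_lt_sum (fun j _ => hmono j) ?_)
    by_cases ha : a = 0
    · obtain ⟨j, hj, hpos⟩ : ∃ j ∈ Finset.range k, wordComp j (List.replicate T 0 ++ w') ≠ 0 := by
        refine Finset.exists_ne_zero_of_sum_ne_zero fun h => hzero ⟨?_, ha⟩
        exact List.length_eq_zero_iff.1 (Nat.le_zero.1 (h ▸ hle))
      refine ⟨j, hj, ?_⟩
      rw [wordComp_concat, Nat.bit_val]
      omega
    · obtain ⟨j, hj⟩ := Nat.exists_testBit_of_ne_zero ha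
      have hjk : j < k := by
        by_contra! hkj
        have hlt : a < 2 ^ j := (hw a (by simp)).trans_le (Nat.pow_le_pow_right two_pos hkj)
        simp [Nat.testBit_lt_two_pow hlt] at hj
      refine ⟨j, Finset.mem_range.2 hjk, ?_⟩
      rw [wordComp_concat, hj, Nat.bit_val, Bool.toNat_true]
      omega

namespace RawDFA

variable (D : RawDFA)

theorem exists_run_replicate_zero_append (T : ℕ) (w : List ℕ) :
    ∃ t ≤ D.trans.length + 2,
      D.run (List.replicate t 0 ++ w) = D.run (List.replicate T 0 ++ w) := by
  have run_replicate (T : ℕ) : D.run (List.replicate T 0) = (D.step · 0)^[T] D.start := by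
    induction T with
    | zero => rfl
    | succ T ih => rw [List.replicate_succ', run_concat, Function.iterate_succ_apply', ih]
  have hmaps : Set.MapsTo (D.step · 0) (D.stateSet : Set ℕ) D.stateSet :=
    fun q _ => D.step_mem_stateSet q 0
  obtain ⟨t, ht, hrun⟩ := exists_iterate_eq (by simpa using D.card_stateSet_le)
    (hmaps.restrict _ _ _) ⟨D.start, D.run_mem_stateSet []⟩ T
  simp only [hmaps.iterate_restrict, Subtype.ext_iff, Set.MapsTo.val_restrict_apply,
    ← run_replicate] at hrun
  refine ⟨t, ht, ?_⟩
  simp only [run, List.foldl_append] at hrun ⊢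
  rw [hrun]

/-- A bound on the length of a shortest word accepted by `D` that denotes `x`. -/
def wordBound (x : ℕ → ℕ) : ℕ := D.trans.length + 2 + ∑ j ∈ Finset.range D.k, x j

theorem mem_relation_iff_exists_mem_boundedLists {x : ℕ → ℕ} :
    x ∈ D.relation ↔ ∃ n < D.wordBound x + 1, ∃ w ∈ boundedLists (2 ^ D.k) n,
      D.run w ∈ D.accept ∧ ∀ j < D.k, wordComp j w = x j := by
  have wordComp_replicate (j T : ℕ) (w : List ℕ) :
      wordComp j (List.replicate T 0 ++ w) = wordComp j w := by
    induction T with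
    | zero => rfl
    | succ T ih => simpa [wordComp, List.replicate_succ] using ih
  constructor
  · rintro ⟨w, ⟨hw, hacc⟩, hx⟩
    obtain ⟨T, w', rfl, hle⟩ := exists_replicate_zero_append hw
    obtain ⟨t, ht, hrun⟩ := D.exists_run_replicate_zero_append T w'
    rw [Finset.sum_congr rfl fun j hj => hx j (Finset.mem_range.1 hj)] at hle
    refine ⟨t + w'.length, Nat.lt_succ_of_le (Nat.add_le_add ht hle), List.replicate t 0 ++ w',
      mem_boundedLists.2 ⟨by simp, ?_⟩, hrun ▸ hacc, fun j hj => ?_⟩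
    · simp only [List.mem_append, List.mem_replicate] at hw ⊢
      rintro a (⟨-, rfl⟩ | ha)
      exacts [by positivity, hw a (.inr ha)]
    · rw [wordComp_replicate, ← hx j hj, wordComp_replicate]
  · rintro ⟨n, -, w, hw, hacc, hx⟩
    exact ⟨w, ⟨(mem_boundedLists.1 hw).2, hacc⟩, hx⟩

end RawDFA

/-! ### Primitive recursive functions -/

section Primrec

open Encodable Denumerable

variable {α : Type*} [Primcodable α]

theorem primrec₂_nat_pow : Primrec₂ ((· ^ ·) : ℕ → ℕ → ℕ) :=
  Primrec₂.unpaired'.1 Nat.Primrec.pow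

theorem primrec_nat_factorial : Primrec Nat.factorial :=
  (Primrec.nat_rec₁ 1 (Primrec.nat_mul.comp₂ (Primrec.succ.comp₂ .left) .right)).of_eq fun n => by
    induction n with
    | zero => rfl
    | succ n ih => exact congrArg ((n + 1) * ·) ih

theorem primrec_sum_range {M : Type*} [AddCommMonoid M] [Primcodable M]
    (hadd : Primrec₂ ((· + ·) : M → M → M)) {n : α → ℕ} {f : α → ℕ → M} (hn : Primrec n)
    (hf : Primrec₂ f) : Primrec fun a => ∑ i ∈ Finset.range (n a), f a i :=
  (Primrec.nat_rec' hn (.const 0) (hadd.comp₂ (Primrec.snd.comp₂ .right)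
    (hf.comp₂ .left (Primrec.fst.comp₂ .right)))).of_eq fun a => by
      induction n a with
      | zero => rfl
      | succ n ih => rw [Finset.sum_range_succ, ← ih]

theorem primrecRel_mem : PrimrecRel fun (a : α) (l : List α) => a ∈ l :=
  (PrimrecRel.exists_mem_list Primrec.eq).swap.of_eq fun a l => by simp [Function.swap]

theorem primrecRel_forall_lt {r : ℕ → α → Prop} (hr : PrimrecRel r) :
    PrimrecRel fun n a => ∀ i < n, r i a :=
  (hr.forall_mem_list.comp (Primrec.list_range.comp .fst) .snd).of_eq fun p => by simp

theorem primrecRel_exists_lt {r : ℕ → α → Prop} (hr : PrimrecRel r) :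
    PrimrecRel fun n a => ∃ i < n, r i a :=
  (hr.exists_mem_list.comp (Primrec.list_range.comp .fst) .snd).of_eq fun p => by simp

theorem encode_natCast (n : ℕ) : encode (n : ℤ) = 2 * n := rfl

theorem encode_negSucc (n : ℕ) : encode (Int.negSucc n) = 2 * n + 1 := rfl

theorem primrec_int_natCast : Primrec ((↑) : ℕ → ℤ) :=
  Primrec.encode_iff.1 (Primrec.nat_double.of_eq encode_natCast)

theorem primrecPred_encode_int_even : PrimrecPred fun z : ℤ => encode z % 2 = 0 :=
  Primrec.eq.comp (Primrec.nat_mod.comp Primrec.encode (.const 2)) (.const 0)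

theorem primrec_int_neg : Primrec (Neg.neg : ℤ → ℤ) :=
  Primrec.encode_iff.1 ((Primrec.ite primrecPred_encode_int_even
    (Primrec.pred.comp .encode) (Primrec.succ.comp .encode)).of_eq fun z => by
      rcases z with (_ | n) | n
      · rfl
      · rw [Int.ofNat_eq_natCast, encode_natCast, if_pos (by omega)]
        exact (encode_negSucc n).symm
      · rw [encode_negSucc, if_neg (by omega)]
        exact (encode_natCast (n + 1)).symm)

theorem primrec_int_toNat : Primrec Int.toNat :=
  (Primrec.ite primrecPred_encode_int_even
    (Primrec.nat_div.comp .encode (.const 2)) (.const 0)).of_eq fun z => by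
      rcases z with n | n
      · rw [Int.ofNat_eq_natCast, encode_natCast, if_pos (by omega), Int.toNat_natCast]
        omega
      · rw [encode_negSucc, if_neg (by omega), Int.toNat_negSucc]

theorem primrec₂_int_natCast_sub_natCast : Primrec₂ fun m n : ℕ => (m - n : ℤ) :=
  (Primrec.ite (Primrec.nat_le.comp .snd .fst) (primrec_int_natCast.comp Primrec.nat_sub)
    (primrec_int_neg.comp (primrec_int_natCast.comp (Primrec.nat_sub.comp .snd .fst)))).of_eq
      fun p => by simp only; split_ifs <;> omega

theorem primrec₂_int_add : Primrec₂ ((· + ·) : ℤ → ℤ → ℤ) := by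
  have hpos := primrec_int_toNat
  have hneg := primrec_int_toNat.comp primrec_int_neg
  exact (primrec₂_int_natCast_sub_natCast.comp₂
    (Primrec.nat_add.comp₂ (hpos.comp₂ .left) (hpos.comp₂ .right))
    (Primrec.nat_add.comp₂ (hneg.comp₂ .left) (hneg.comp₂ .right))).of_eq fun z w => by omega

theorem primrec₂_int_mul : Primrec₂ ((· * ·) : ℤ → ℤ → ℤ) := by
  have hpos := primrec_int_toNat
  have hneg := primrec_int_toNat.comp primrec_int_neg
  refine (primrec₂_int_natCast_sub_natCast.comp₂
    (Primrec.nat_add.comp₂ (Primrec.nat_mul.comp₂ (hpos.comp₂ .left) (hpos.comp₂ .right))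
      (Primrec.nat_mul.comp₂ (hneg.comp₂ .left) (hneg.comp₂ .right)))
    (Primrec.nat_add.comp₂ (Primrec.nat_mul.comp₂ (hpos.comp₂ .left) (hneg.comp₂ .right))
      (Primrec.nat_mul.comp₂ (hneg.comp₂ .left) (hpos.comp₂ .right)))).of_eq fun z w => ?_
  calc _ = ((z.toNat : ℤ) - (-z).toNat) * ((w.toNat : ℤ) - (-w).toNat) := by push_cast; ring
    _ = z * w := by rw [Int.toNat_sub_toNat_neg, Int.toNat_sub_toNat_neg]

theorem primrec₂_boundedLists : Primrec₂ boundedLists := by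
  have hcons : Primrec₂ fun (p : (ℕ × ℕ × List (List ℕ)) × List ℕ) (a : ℕ) => a :: p.2 :=
    Primrec.list_cons.comp₂ .right (Primrec.snd.comp₂ .left)
  have hstep : Primrec₂ fun (B : ℕ) (p : ℕ × List (List ℕ)) =>
      p.2.flatMap fun l => (List.range B).map (· :: l) :=
    Primrec.list_flatMap (Primrec.snd.comp .snd)
      (Primrec.list_map (Primrec.list_range.comp (Primrec.fst.comp .fst)) hcons)
  exact (Primrec.nat_rec (.const [[]]) hstep).of_eq fun B n => by
    induction n with
    | zero => rfl
    | succ n ih => simp only [ih, boundedLists]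

theorem primrec_linearIndex : Primrec linearIndex := by
  have hgap : Primrec gap :=
    Primrec.nat_add.comp (primrec₂_nat_pow.comp (.const 2) .id) (.const 2)
  exact Primrec.nat_add.comp (Primrec.nat_mul.comp (.const 2) (Primrec.succ.comp
    (primrec₂_nat_pow.comp (.const 2) (Primrec.nat_mul.comp (.const 2) hgap)))) (.const 3)

theorem primrec_elimIndex : Primrec elimIndex := by
  have hfactorial : Primrec fun N => (2 ^ N).factorial :=
    primrec_nat_factorial.comp (primrec₂_nat_pow.comp (.const 2) .id)
  have hmul {f g : ℕ → ℕ} (hf : Primrec f) (hg : Primrec g) : Primrec fun N => f N * g N :=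
    Primrec.nat_mul.comp hf hg
  exact hmul (hmul (hmul (hmul (hmul (.const 2) (Primrec.succ.comp (hmul .id hfactorial)))
    hfactorial) (primrec₂_nat_pow.comp primrec_linearIndex .id)) primrec_linearIndex)
    primrec_linearIndex

theorem primrec₂_solutionBound : Primrec₂ solutionBound := by
  have hindex : Primrec₂ fun (p : ℕ × ℕ) (_ : ℕ) => elimIndex^[p.1] p.2 :=
    (Primrec.nat_iterate .fst .snd (primrec_elimIndex.comp₂ .right)).comp₂ .left
  exact Primrec.nat_iterate (Primrec.succ.comp .fst) (.const 0) (primrec₂_nat_pow.comp₂ (.const 2)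
    (Primrec.nat_add.comp₂ (Primrec.succ.comp₂ .right) (primrec₂_nat_pow.comp₂ (.const 2) hindex)))

theorem SFml.primrec_modelBound : Primrec SFml.modelBound :=
  primrec₂_solutionBound.comp .id (primrec₂_nat_pow.comp (.const 2)
    (Primrec.nat_add.comp .id (.const 3)))

theorem primrec₂_assignment : Primrec₂ assignment := Primrec.list_getD 0

theorem primrec₂_wordComp : Primrec₂ wordComp := by
  have htestBit : PrimrecRel fun j a : ℕ => a.testBit j = true := by
    refine (Primrec.eq.comp₂ (Primrec.nat_mod.comp₂ (Primrec.nat_div.comp₂ .right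
      (primrec₂_nat_pow.comp₂ (.const 2) .left)) (.const 2)) (.const 1)).of_eq fun j a => ?_
    rw [Nat.testBit_eq_decide_div_mod_eq, decide_eq_true_iff]
  have hbit : Primrec₂ fun (p : ℕ × List ℕ) (q : ℕ × ℕ) => if q.2.testBit p.1 then 1 else 0 :=
    Primrec.ite (htestBit.comp (Primrec.fst.comp .fst) (Primrec.snd.comp .snd)) (.const 1)
      (.const 0)
  exact Primrec.list_foldl .snd (.const 0) (Primrec.nat_add.comp₂
    (Primrec.nat_mul.comp₂ (.const 2) (Primrec.fst.comp₂ .right)) hbit)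

namespace RawDFA

/-- Automata as the tuples that are encoded in `RawDFA.enc`. -/
def equivProd : RawDFA ≃ ℕ × ℕ × List ℕ × ℕ × List ℕ where
  toFun D := (D.k, D.states, D.trans, D.start, D.accept)
  invFun p := ⟨p.1, p.2.1, p.2.2.1, p.2.2.2.1, p.2.2.2.2⟩

instance : Denumerable RawDFA := .ofEquiv _ equivProd

theorem primrec_equivProd : Primrec equivProd := Primrec.of_equiv

theorem primrec_k : Primrec k := Primrec.fst.comp primrec_equivProd

theorem primrec_trans : Primrec trans :=
  Primrec.fst.comp (Primrec.snd.comp (Primrec.snd.comp primrec_equivProd))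

theorem primrec_start : Primrec start :=
  Primrec.fst.comp (Primrec.snd.comp (Primrec.snd.comp (Primrec.snd.comp primrec_equivProd)))

theorem primrec_accept : Primrec accept :=
  Primrec.snd.comp (Primrec.snd.comp (Primrec.snd.comp (Primrec.snd.comp primrec_equivProd)))

theorem primrec_step : Primrec fun p : RawDFA × ℕ × ℕ => p.1.step p.2.1 p.2.2 :=
  (Primrec.list_getD 0).comp (primrec_trans.comp .fst) (Primrec.nat_add.comp
    (Primrec.nat_mul.comp (Primrec.fst.comp .snd)
      (primrec₂_nat_pow.comp (.const 2) (primrec_k.comp .fst)))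
    (Primrec.snd.comp .snd))

theorem primrec_run {D : α → RawDFA} {w : α → List ℕ} (hD : Primrec D) (hw : Primrec w) :
    Primrec fun a => (D a).run (w a) := by
  refine Primrec.list_foldl hw (primrec_start.comp hD) (h := fun a q => (D a).step q.1 q.2) ?_
  exact primrec_step.comp ((hD.comp .fst).pair .snd)

theorem primrecPred_mem_relation {D : α → RawDFA} {x : α → ℕ → ℕ} (hD : Primrec D)
    (hx : Primrec₂ x) : PrimrecPred fun a => x a ∈ (D a).relation := by
  have hk : Primrec fun a => (D a).k := primrec_k.comp hD
  have hbound : Primrec fun a => (D a).wordBound (x a) + 1 :=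
    Primrec.succ.comp (Primrec.nat_add.comp (Primrec.nat_add.comp
      (Primrec.list_length.comp (primrec_trans.comp hD)) (.const 2))
      (primrec_sum_range Primrec.nat_add hk hx))
  have hlists : Primrec₂ fun (n : ℕ) (a : α) => boundedLists (2 ^ (D a).k) n :=
    primrec₂_boundedLists.comp (primrec₂_nat_pow.comp (.const 2) (hk.comp .snd)) .fst
  have hcomp : PrimrecRel fun (j : ℕ) (p : List ℕ × α) => wordComp j p.1 = x p.2 j :=
    Primrec.eq.comp (primrec₂_wordComp.comp .fst (Primrec.fst.comp .snd))
      (hx.comp (Primrec.snd.comp .snd) .fst)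
  have hdenotes : PrimrecPred fun p : List ℕ × α =>
      ∀ j < (D p.2).k, wordComp j p.1 = x p.2 j :=
    (primrecRel_forall_lt hcomp).comp (hk.comp .snd) .id
  have hword : PrimrecRel fun (w : List ℕ) (a : α) =>
      (D a).run w ∈ (D a).accept ∧ ∀ j < (D a).k, wordComp j w = x a j :=
    (primrecRel_mem.comp (primrec_run (hD.comp .snd) .fst)
      (primrec_accept.comp (hD.comp .snd))).and hdenotes
  have hlength : PrimrecRel fun (n : ℕ) (a : α) => ∃ w ∈ boundedLists (2 ^ (D a).k) n,
      (D a).run w ∈ (D a).accept ∧ ∀ j < (D a).k, wordComp j w = x a j :=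
    hword.exists_mem_list.comp hlists .snd
  exact ((primrecRel_exists_lt hlength).comp hbound .id).of_eq fun a =>
    (D a).mem_relation_iff_exists_mem_boundedLists.symm

end RawDFA

theorem primrecPred_linearEquation {c : α → List ℤ} {b : α → ℤ} {x : α → ℕ → ℕ}
    (hc : Primrec c) (hb : Primrec b) (hx : Primrec₂ x) : PrimrecPred fun a =>
      ∑ i ∈ Finset.range (c a).length, (c a).getD i 0 * (x a i : ℤ) = b a :=
  Primrec.eq.comp (primrec_sum_range primrec₂_int_add (Primrec.list_length.comp hc)
    (primrec₂_int_mul.comp₂ ((Primrec.list_getD 0).comp₂ (hc.comp₂ .left) .right)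
      (primrec_int_natCast.comp₂ hx))) hb

namespace SFml

/-- Truth, under the assignment `l`, of the formula whose Gödel number `n` is the length of
`table`, provided the entries of `table` are the truth values of the formulas with smaller Gödel
numbers. The number `n.unpair.1` is the tag of the outermost constructor. -/
def SatCode (l : List ℕ) (table : List Bool) : Prop :=
  let n := table.length.unpair
  (n.1 = 0 ∧ ∑ i ∈ Finset.range (ofNat (List ℤ × ℤ) n.2).1.length,
    (ofNat (List ℤ × ℤ) n.2).1.getD i 0 * (assignment l i : ℤ) = (ofNat (List ℤ × ℤ) n.2).2) ∨
  (n.1 = 1 ∧ assignment l n.2.unpair.1 = 2 ^ assignment l n.2.unpair.2) ∨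
  (n.1 = 2 ∧ assignment l ∘ ((ofNat (RawDFA × List ℕ) n.2).2.getD · 0) ∈
    (ofNat (RawDFA × List ℕ) n.2).1.relation) ∨
  (n.1 = 3 ∧ table.getD n.2.unpair.1 false = true ∧ table.getD n.2.unpair.2 false = true) ∨
  (n.1 = 4 ∧ (table.getD n.2.unpair.1 false = true ∨ table.getD n.2.unpair.2 false = true))

open Classical in
/-- The truth values, under the assignment `l`, of the formulas with Gödel numbers below `n`. -/
noncomputable def truthTable (l : List ℕ) : ℕ → List Bool
  | 0 => []
  | n + 1 => truthTable l n ++ [decide (SatCode l (truthTable l n))]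

theorem length_truthTable (l : List ℕ) (n : ℕ) : (truthTable l n).length = n := by
  induction n with
  | zero => rfl
  | succ n ih => rw [truthTable, List.length_append, ih, List.length_singleton]

theorem getD_truthTable {l : List ℕ} {m n : ℕ} (h : m < n) :
    (truthTable l n).getD m false = true ↔ SatCode l (truthTable l m) := by
  induction n with
  | zero => exact absurd h m.not_lt_zero
  | succ n ih =>
    rw [truthTable]
    rcases (Nat.lt_succ_iff.1 h).lt_or_eq with hlt | rfl
    · rw [List.getD_append _ _ _ _ (by rwa [length_truthTable]), ih hlt]
    · rw [List.getD_append_right _ _ _ _ (length_truthTable l m).le]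
      simp [length_truthTable]

theorem satCode_truthTable_enc (l : List ℕ) (Φ : SFml) :
    SatCode l (truthTable l Φ.enc) ↔ Φ.Sat (assignment l) := by
  induction Φ with
  | lin c b =>
    rw [SatCode, length_truthTable]
    simp only [enc, Nat.unpair_pair, ofNat_encode]
    simp [Sat]
  | expo i j =>
    rw [SatCode, length_truthTable]
    simp [enc, Sat]
  | reg D xs =>
    have hpair : Nat.pair D.enc (encode xs) = encode (D, xs) := rfl
    rw [SatCode, length_truthTable]
    simp only [enc, Nat.unpair_pair, hpair, ofNat_encode]
    simp [Sat, RawDFA.relation]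
  | and φ ψ hφ hψ =>
    have h : 3 + φ.enc + ψ.enc ≤ (and φ ψ).enc := add_add_le_pair_pair 3 _ _
    have hleft := (getD_truthTable (l := l) (by omega : φ.enc < (and φ ψ).enc)).trans hφ
    have hright := (getD_truthTable (l := l) (by omega : ψ.enc < (and φ ψ).enc)).trans hψ
    rw [SatCode, length_truthTable, Sat, ← hleft, ← hright]
    simp [enc]
  | or φ ψ hφ hψ =>
    have h : 4 + φ.enc + ψ.enc ≤ (or φ ψ).enc := add_add_le_pair_pair 4 _ _
    have hleft := (getD_truthTable (l := l) (by omega : φ.enc < (or φ ψ).enc)).trans hφ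
    have hright := (getD_truthTable (l := l) (by omega : ψ.enc < (or φ ψ).enc)).trans hψ
    rw [SatCode, length_truthTable, Sat, ← hleft, ← hright]
    simp [enc]

theorem primrecRel_satCode : PrimrecRel SatCode := by
  have htag : Primrec fun p : List ℕ × List Bool => p.2.length.unpair.1 :=
    Primrec.fst.comp (Primrec.unpair.comp (Primrec.list_length.comp .snd))
  have hpayload : Primrec fun p : List ℕ × List Bool => p.2.length.unpair.2 :=
    Primrec.snd.comp (Primrec.unpair.comp (Primrec.list_length.comp .snd))
  have hleft : Primrec fun p : List ℕ × List Bool => p.2.length.unpair.2.unpair.1 :=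
    Primrec.fst.comp (Primrec.unpair.comp hpayload)
  have hright : Primrec fun p : List ℕ × List Bool => p.2.length.unpair.2.unpair.2 :=
    Primrec.snd.comp (Primrec.unpair.comp hpayload)
  have hlin := (Primrec.ofNat (List ℤ × ℤ)).comp hpayload
  have hreg := (Primrec.ofNat (RawDFA × List ℕ)).comp hpayload
  have hentry {f : List ℕ × List Bool → ℕ} (hf : Primrec f) :
      PrimrecPred fun p : List ℕ × List Bool => p.2.getD (f p) false = true :=
    Primrec.eq.comp ((Primrec.list_getD false).comp .snd hf) (.const true)
  have hassignment : Primrec₂ fun (p : List ℕ × List Bool) => assignment p.1 :=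
    primrec₂_assignment.comp₂ (Primrec.fst.comp₂ .left) .right
  have hequation := primrecPred_linearEquation (Primrec.fst.comp hlin) (Primrec.snd.comp hlin)
    hassignment
  have hexp := Primrec.eq.comp (hassignment.comp .id hleft)
    (primrec₂_nat_pow.comp (.const 2) (hassignment.comp .id hright))
  have hrelation := RawDFA.primrecPred_mem_relation (Primrec.fst.comp hreg)
    (hassignment.comp₂ .left ((Primrec.list_getD 0).comp₂ ((Primrec.snd.comp hreg).comp₂ .left)
      .right))
  exact ((Primrec.eq.comp htag (.const 0)).and hequation).or <|
    ((Primrec.eq.comp htag (.const 1)).and hexp).or <|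
    ((Primrec.eq.comp htag (.const 2)).and hrelation).or <|
    ((Primrec.eq.comp htag (.const 3)).and ((hentry hleft).and (hentry hright))).or <|
    (Primrec.eq.comp htag (.const 4)).and ((hentry hleft).or (hentry hright))

theorem primrec₂_truthTable : Primrec₂ truthTable := by
  classical
  have hstep : Primrec₂ fun (l : List ℕ) (p : ℕ × List Bool) => p.2 ++ [decide (SatCode l p.2)] :=
    Primrec.list_concat.comp (Primrec.snd.comp .snd)
      (primrecRel_satCode.comp .fst (Primrec.snd.comp .snd)).decide
  exact (Primrec.nat_rec (.const []) hstep).of_eq fun l n => by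
    induction n with
    | zero => rfl
    | succ n ih => simp only [ih, truthTable]

theorem primrecPred_exists_satCode : PrimrecPred fun n =>
    ∃ l ∈ boundedLists (modelBound n) n, SatCode l (truthTable l n) := by
  have hsat : PrimrecRel fun (l : List ℕ) (n : ℕ) => SatCode l (truthTable l n) :=
    primrecRel_satCode.comp .fst primrec₂_truthTable
  exact hsat.exists_mem_list.comp (primrec₂_boundedLists.comp primrec_modelBound .id) .id

end SFml

end Primrec

theorem generalised_semenov_satisfiability_decidable_general :
    ∃ f : ℕ → Bool, Primrec f ∧ ∀ Φ : SFml, f Φ.enc = true ↔ ∃ v : ℕ → ℕ, Φ.Sat v := by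
  classical
  refine ⟨_, SFml.primrecPred_exists_satCode.decide, fun Φ => ?_⟩
  simp only [decide_eq_true_iff, SFml.satCode_truthTable_enc, SFml.exists_sat_iff]

/-- Satisfiability of quantifier-free formulas of generalised Semënov arithmetic is
decidable: a computable function on Gödel encodings returns `true` exactly on the
satisfiable formulas. -/
theorem generalised_semenov_satisfiability_decidable :
    ∃ f : ℕ → Bool, Computable f ∧
      ∀ Φ : SFml, Φ.WF → (f Φ.enc = true ↔ ∃ v : ℕ → ℕ, Φ.Sat v) := by
  obtain ⟨f, hf, hsat⟩ := generalised_semenov_satisfiability_decidable_general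
  exact ⟨f, hf.to_comp, fun Φ _ => hsat Φ⟩
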